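/- arXiv:1512.09236 — 4 statements merged into one kernel-verified Lean document; each statement's English description precedes it below -/
import Mathlib

section
/- Let G be the complete graph on an even number n ≥ 4 of vertices, let C be a cycle cover of G and M a perfect matching of G, and let G_1 be the multigraph consisting of two copies of every edge of C and one copy of every edge of M. Then there exists a set F of edges containing exactly one edge of each kite of C (with respect to M) such that the multigraph obtained from G_1 by removing one copy of each edge of F admits a path-3-coloring. -/
/-! Orient every cycle of the cover, so that `C` becomes a permutation `σ` without fixed points or
2-cycles, and view the matching as a fixed-point-free involution. The set `F` contains one matching
edge inside each kite. Let `μ` be the involution in which the two ends of each edge of `F` have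
become fixed points. A cycle of `σ` which is not a kite meets at least three orbits of the matching
involution (`threeBlocks_or_kite`), and these are also orbits of `μ`; on a kite the two new fixed
points and a third vertex lie in different orbits of `μ`. So every cycle of `σ` meets at least three
orbits of `μ` (`BlockData`), and this is all that the colouring needs.

A colouring is encoded by three functions on the vertices (`exists_labelling`):
* `a v`, invariant under `μ`, is the colour of the matching edge at `v`;
* `l v` is the colour *missing* on the edge from `v` to `σ v`, whose two copies receive the other
  two colours;
* `r v`, constant on the cycles of `σ`, is a rank.

They are required to satisfy: `l v = a v`, or else `a v = l (σ⁻¹ v)` and the mate of `v` lies in a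
cycle of strictly smaller rank; and on every cycle `l` takes all three values. The first condition
says that the colour of the matching edge at `v` misses one of the two cover edges at `v`, so every
colour class has maximum degree 2. For acyclicity of the class of colour `k`, order the vertices
lexicographically by decreasing rank and by the distance along `σ` to the next vertex with
`l = k`. With respect to this height every vertex has at most one neighbour that is not higher,
which is impossible at the highest vertex of a cycle (`isAcyclic_of_height`,
`isLinearForest_color`). If a matching edge joins `v` and `σ v`, the ranks of its ends agree, so
`l v = a v` and the three copies of this edge receive three different colours
(`pathColorable_of_blockData`).

The labelling is built greedily. Call a union `W` of cycles solvable if every colouring of the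
matching edges can be changed inside `W` so that `W` gets a suitable labelling, where vertices
matched to the outside of `W` count as having a mate of smaller rank. Take a maximal solvable `W`.
If some cycle outside `W` has a vertex which is matched into `W`, matched inside its own cycle, or
fixed by `μ`, that cycle can be added (`extend_one`); otherwise some two cycles outside `W` are
joined by a matching edge and both can be added together (`extend_two`). In both cases the added
cycles choose their colours first and have the smallest ranks. Hence `W` is everything
(`solvable_univ`). -/

/-- A simple graph is a linear forest if it is acyclic and every vertex has
degree at most 2 (i.e., it is a vertex-disjoint union of simple paths). -/
def IsLinearForest {V : Type*} (G : SimpleGraph V) : Prop :=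
  G.IsAcyclic ∧ ∀ v : V, (G.neighborSet v).ncard ≤ 2

/-- A path-`k`-coloring of the multigraph with edge-multiplicity function `m`. -/
def IsPathColoring {V : Type*} (k : ℕ) (m : Sym2 V → ℕ)
    (f : Sym2 V → Finset (Fin k)) : Prop :=
  (∀ e, (f e).card = m e) ∧
    ∀ c : Fin k, IsLinearForest (SimpleGraph.fromEdgeSet {e | c ∈ f e})

def PathColorable {V : Type*} (k : ℕ) (m : Sym2 V → ℕ) : Prop :=
  ∃ f, IsPathColoring k m f

/-- A set of edges is a perfect matching if its edges are loopless and every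
vertex lies on exactly one of them. -/
def IsPerfectMatchingEdges {V : Type*} (M : Finset (Sym2 V)) : Prop :=
  (∀ e ∈ M, ¬ e.IsDiag) ∧ ∀ v : V, ∃! e, e ∈ M ∧ v ∈ e

/-- A set of edges is a cycle cover if its edges are loopless and every vertex
lies on exactly two of them. -/
def IsCycleCoverEdges {V : Type*} (C : Finset (Sym2 V)) : Prop :=
  (∀ e ∈ C, ¬ e.IsDiag) ∧ ∀ v : V, ({e : Sym2 V | e ∈ C ∧ v ∈ e}).ncard = 2

/-- A 3-kite: a triangle of the cycle cover `C` one of whose edges belongs to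
the matching `M`. -/
def IsThreeKite {V : Type*} (C M : Finset (Sym2 V)) (x y z : V) : Prop :=
  x ≠ y ∧ x ≠ z ∧ y ≠ z ∧
    s(x, y) ∈ C ∧ s(y, z) ∈ C ∧ s(x, z) ∈ C ∧
    (s(x, y) ∈ M ∨ s(y, z) ∈ M ∨ s(x, z) ∈ M)

/-- A 4-kite: a 4-cycle of the cycle cover `C` such that the matching `M`
contains two edges both of whose endpoints are vertices of the 4-cycle. -/
def IsFourKite {V : Type*} (C M : Finset (Sym2 V)) (x y z t : V) : Prop :=
  [x, y, z, t].Pairwise (· ≠ ·) ∧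
    s(x, y) ∈ C ∧ s(y, z) ∈ C ∧ s(z, t) ∈ C ∧ s(t, x) ∈ C ∧
    ∃ e₁ ∈ M, ∃ e₂ ∈ M, e₁ ≠ e₂ ∧
      (∀ a ∈ e₁, a = x ∨ a = y ∨ a = z ∨ a = t) ∧
      (∀ a ∈ e₂, a = x ∨ a = y ∨ a = z ∨ a = t)

/-- The edges of `E` with both endpoints in the vertex set `S`. -/
def edgesWithin {V : Type*} [DecidableEq V] (E : Finset (Sym2 V))
    (S : Finset V) : Finset (Sym2 V) :=
  E.filter (· ∈ S.sym2)

/-! ### Colour classes are linear forests -/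

/-- A highest vertex of a cycle has two distinct neighbours that are not higher than itself, so a
graph in which every vertex has at most one such neighbour is acyclic. -/
theorem isAcyclic_of_height {V α : Type*} [LinearOrder α] (G : SimpleGraph V) (h : V → α)
    (hh : ∀ v w₁ w₂, G.Adj v w₁ → G.Adj v w₂ → h w₁ ≤ h v → h w₂ ≤ h v → w₁ = w₂) :
    G.IsAcyclic := by
  classical
  intro v p hp
  obtain ⟨u, hu, hmax⟩ := p.support.toFinset.exists_max_image h ⟨v, by simp⟩
  rw [List.mem_toFinset] at hu
  have hq := hp.rotate hu
  have hmem : ∀ w ∈ (p.rotate u hu).support, h w ≤ h u := fun w hw =>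
    hmax w (by rw [List.mem_toFinset]; exact (p.mem_support_rotate_iff u hu).1 hw)
  refine hq.snd_ne_penultimate (hh u _ _ ((p.rotate u hu).adj_snd hq.not_nil)
    ((p.rotate u hu).adj_penultimate hq.not_nil).symm (hmem _ ?_) (hmem _ ?_))
  · exact SimpleGraph.Walk.getVert_mem_support _ _
  · exact SimpleGraph.Walk.getVert_mem_support _ _

/-- If `P` holds somewhere on every cycle of `σ`, then the number of steps along `σ` to the next
point satisfying `P` decreases at each point where `P` fails. -/
theorem exists_descent {V : Type*} (σ : Equiv.Perm V) [Finite V] (P : V → Prop)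
    (hP : ∀ x, ∃ y, σ.SameCycle x y ∧ P y) :
    ∃ d : V → ℕ, ∀ x, ¬ P x → d (σ x) < d x := by
  classical
  have hex : ∀ x, ∃ n : ℕ, P ((σ ^ n) x) := by
    intro x
    obtain ⟨y, hy, hPy⟩ := hP x
    obtain ⟨n, hn⟩ := hy.exists_nat_pow_eq
    exact ⟨n, hn ▸ hPy⟩
  refine ⟨fun x => Nat.find (hex x), fun x hx => ?_⟩
  have h0 : Nat.find (hex x) ≠ 0 := by
    intro h
    have := Nat.find_spec (hex x)
    rw [h] at this
    exact hx (by simpa using this)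
  obtain ⟨m, hm⟩ := Nat.exists_eq_succ_of_ne_zero h0
  have h1 := Nat.find_spec (hex x)
  rw [hm, Nat.succ_eq_add_one, pow_succ, Equiv.Perm.mul_apply] at h1
  have := Nat.find_min' (hex (σ x)) h1
  show Nat.find (hex (σ x)) < Nat.find (hex x)
  omega

/-- The class of colour `k` is a linear forest. Its edges are the cover edges from `v` to `σ v`
with `l v ≠ k` and the matching edges with `a v = k`; `E` is any set of such edges. -/
theorem isLinearForest_color {V : Type*} [Finite V] (σ : Equiv.Perm V) (μ : V → V)
    (hμ : ∀ x, μ (μ x) = x)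
    (a l : V → Fin 3) (r : V → ℕ) (ha : ∀ x, a (μ x) = a x) (hr : ∀ x, r (σ x) = r x)
    (hl : ∀ x, l x = a x ∨ (a x = l (σ.symm x) ∧ r (μ x) < r x))
    (hsee : ∀ x k, ∃ y, σ.SameCycle x y ∧ l y = k) (k : Fin 3) (E : Set (Sym2 V))
    (hE : ∀ e ∈ E, (∃ v, e = s(v, σ v) ∧ l v ≠ k) ∨ (∃ v, e = s(v, μ v) ∧ a v = k)) :
    IsLinearForest (SimpleGraph.fromEdgeSet E) := by
  classical
  obtain ⟨d, hd⟩ := exists_descent σ (fun y => l y = k) (fun x => hsee x k)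
  have hadj : ∀ x w, (SimpleGraph.fromEdgeSet E).Adj x w →
      (w = σ x ∧ l x ≠ k) ∨ (w = σ.symm x ∧ l (σ.symm x) ≠ k) ∨ (w = μ x ∧ a x = k) := by
    intro x w hxw
    rw [SimpleGraph.fromEdgeSet_adj] at hxw
    rcases hE _ hxw.1 with ⟨v, hv, hk⟩ | ⟨v, hv, hk⟩
    · rcases Sym2.eq_iff.1 hv with ⟨rfl, rfl⟩ | ⟨rfl, rfl⟩
      · exact Or.inl ⟨rfl, hk⟩
      · exact Or.inr (Or.inl ⟨by simp, by simpa using hk⟩)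
    · rcases Sym2.eq_iff.1 hv with ⟨rfl, rfl⟩ | ⟨rfl, rfl⟩
      · exact Or.inr (Or.inr ⟨rfl, hk⟩)
      · exact Or.inr (Or.inr ⟨(hμ _).symm, by rw [ha]; exact hk⟩)
  constructor
  · -- The height decreases along `σ`, and a matching edge at a vertex with `l x ≠ a x` leads
    -- upwards, because the rank of the mate is smaller.
    refine isAcyclic_of_height _ (fun x => toLex (OrderDual.toDual (r x), d x)) ?_
    have key : ∀ x w, (SimpleGraph.fromEdgeSet E).Adj x w →
        toLex (OrderDual.toDual (r w), d w) ≤ toLex (OrderDual.toDual (r x), d x) →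
        w = if l x = k then μ x else σ x := by
      intro x w hxw hle
      rw [Prod.Lex.toLex_le_toLex] at hle
      simp only [OrderDual.toDual_lt_toDual, OrderDual.toDual_inj] at hle
      rcases hadj x w hxw with ⟨rfl, h⟩ | ⟨rfl, h⟩ | ⟨rfl, h⟩
      · rw [if_neg h]
      · exfalso
        have h1 := hd _ h
        have h2 := hr (σ.symm x)
        rw [Equiv.apply_symm_apply] at h1 h2
        omega
      · split_ifs with hk
        · rfl
        · exfalso
          rcases hl x with h1 | h1
          · exact hk (h1.trans h)
          · omega
    intro v w₁ w₂ h₁ h₂ hle₁ hle₂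
    rw [key v w₁ h₁ hle₁, key v w₂ h₂ hle₂]
  · intro x
    -- Of the three potential neighbours `σ x`, `σ⁻¹ x` and `μ x`, one is always missing.
    have hsub : ∃ p q, (SimpleGraph.fromEdgeSet E).neighborSet x ⊆ {p, q} := by
      by_cases h1 : l x = k
      · refine ⟨σ.symm x, μ x, fun w hw => ?_⟩
        rcases hadj x w hw with h | h | h
        · exact absurd h1 h.2
        · simp [h.1]
        · simp [h.1]
      · by_cases h2 : l (σ.symm x) = k
        · refine ⟨σ x, μ x, fun w hw => ?_⟩
          rcases hadj x w hw with h | h | h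
          · simp [h.1]
          · exact absurd h2 h.2
          · simp [h.1]
        · refine ⟨σ x, σ.symm x, fun w hw => ?_⟩
          rcases hadj x w hw with h | h | h
          · simp [h.1]
          · simp [h.1]
          · rcases hl x with h3 | h3
            · exact absurd (h3.trans h.2) h1
            · exact absurd (h3.1.symm.trans h.2) h2
    obtain ⟨p, q, hpq⟩ := hsub
    refine (Set.ncard_le_ncard hpq (Set.toFinite _)).trans ?_
    exact (Set.ncard_insert_le _ _).trans (by simp)

/-! ### Labellings of a single cycle -/

theorem fin3_exists (p q : Fin 3) : ∃ m, m ≠ p ∧ m ≠ q := by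
  revert p q; decide

theorem fin3_cover (p q m k : Fin 3) (h1 : p ≠ q) (h2 : m ≠ p) (h3 : m ≠ q) :
    k = p ∨ k = q ∨ k = m := by
  revert p q m k; decide

/-- The `σ`-cycle of `x₀` has a labelling `l` compatible with the matching colours `a`: at every
vertex `x` either `l x = a x`, or `x` satisfies `pre` and `a x = l (σ⁻¹ x)`; moreover `l` takes
all three values on the cycle. The predicate `pre` marks the vertices whose mate has smaller rank.
-/
def Lab {V : Type*} (σ : Equiv.Perm V) (x₀ : V) (pre : V → Prop) (a : V → Fin 3) : Prop :=
  ∃ l : V → Fin 3,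
    (∀ x, σ.SameCycle x₀ x → l x = a x ∨ (a x = l (σ.symm x) ∧ pre x)) ∧
      ∀ k, ∃ y, σ.SameCycle x₀ y ∧ l y = k

section
variable {V : Type*} {σ : Equiv.Perm V} {x₀ : V} {pre : V → Prop} {a : V → Fin 3}

/-- If the matching edges at the cycle already show three colours, then `l = a` is a labelling. -/
theorem lab_three (p q m : V) (hp : σ.SameCycle x₀ p) (hq : σ.SameCycle x₀ q)
    (hm : σ.SameCycle x₀ m) (h1 : a p ≠ a q) (h2 : a m ≠ a p) (h3 : a m ≠ a q) :
    Lab σ x₀ pre a := by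
  refine ⟨a, fun x _ => Or.inl rfl, fun k => ?_⟩
  rcases fin3_cover _ _ _ k h1 h2 h3 with h | h | h
  exacts [⟨p, hp, h.symm⟩, ⟨q, hq, h.symm⟩, ⟨m, hm, h.symm⟩]

/-- If two consecutive vertices `σ⁻¹ v` and `v` have equal colours, some other colour occurs on
the cycle and `v` satisfies `pre`, then `l v` can be set to a third colour, with `l = a`
elsewhere. -/
theorem lab_two (v y : V) (hv : σ.SameCycle x₀ v) (hy : σ.SameCycle x₀ y) (hpre : pre v)
    (hne : σ.symm v ≠ v) (h1 : a v = a (σ.symm v)) (h2 : a y ≠ a v) :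
    Lab σ x₀ pre a := by
  classical
  obtain ⟨m, hm1, hm2⟩ := fin3_exists (a v) (a y)
  have hyv : y ≠ v := fun h => h2 (by rw [h])
  refine ⟨Function.update a v m, fun x _ => ?_, fun k => ?_⟩
  · by_cases hx : x = v
    · subst hx
      exact Or.inr ⟨by rw [Function.update_of_ne hne, h1], hpre⟩
    · exact Or.inl (Function.update_of_ne hx _ _)
  · rcases fin3_cover _ _ _ k h2 hm2 hm1 with h | h | h
    · exact ⟨y, hy, by rw [Function.update_of_ne hyv, h]⟩
    · exact ⟨σ.symm v, by simpa using hv, by rw [Function.update_of_ne hne, h, h1]⟩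
    · exact ⟨v, hv, by simp [h]⟩

/-- Suppose that the colours on the cycle are prescribed except at `z`, and that all vertices
other than `z` satisfy `pre`. Then a labelling exists for all but at most one choice of the colour
at `z`. -/
theorem lab_one_free (hσ1 : ∀ x, σ x ≠ x) (hσ2 : ∀ x, σ (σ x) ≠ x) (a₀ : V → Fin 3) (z : V)
    (hz : σ.SameCycle x₀ z)
    (hpre : ∀ x, σ.SameCycle x₀ x → x ≠ z → pre x) :
    ∃ b, ∀ a : V → Fin 3, (∀ x, σ.SameCycle x₀ x → x ≠ z → a x = a₀ x) → a z ≠ b →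
      Lab σ x₀ pre a := by
  have hz1 : σ.SameCycle x₀ (σ z) := by simpa using hz
  have hz2 : σ.SameCycle x₀ (σ (σ z)) := by simpa using hz
  -- If the prescribed colours are all equal, that colour is the bad one at `z`; otherwise any
  -- prescribed colour different from that of `σ z` may serve as the excluded one.
  by_cases hsame : ∀ x, σ.SameCycle x₀ x → x ≠ z → a₀ x = a₀ (σ z)
  · refine ⟨a₀ (σ z), fun a ha haz => ?_⟩
    refine lab_two (σ (σ z)) z hz2 hz (hpre _ hz2 (hσ2 z)) ?_ ?_ ?_
    · simpa using (hσ1 (σ z)).symm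
    · rw [Equiv.symm_apply_apply, ha _ hz2 (hσ2 z), ha _ hz1 (hσ1 z), hsame _ hz2 (hσ2 z)]
    · rwa [ha _ hz2 (hσ2 z), hsame _ hz2 (hσ2 z)]
  · push Not at hsame
    obtain ⟨p, hp, hpz, hpq⟩ := hsame
    obtain ⟨m, hm1, hm2⟩ := fin3_exists (a₀ p) (a₀ (σ z))
    refine ⟨a₀ p, fun a ha haz => ?_⟩
    have hap := ha p hp hpz
    have haz1 := ha _ hz1 (hσ1 z)
    rcases fin3_cover _ _ _ (a z) hpq hm1 hm2 with h | h | h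
    · exact absurd h haz
    · refine lab_two (σ z) p hz1 hp (hpre _ hz1 (hσ1 z)) ?_ ?_ ?_
      · simpa using (hσ1 z).symm
      · rw [Equiv.symm_apply_apply, haz1, h]
      · rwa [haz1, hap]
    · exact lab_three p (σ z) z hp hz1 hz (by rwa [hap, haz1]) (by rwa [hap, h])
        (by rwa [haz1, h])
end

/-- Two proper colourings of a cycle with the same two colours that agree at one vertex agree
everywhere. -/
theorem alternating_unique {V : Type*} [Finite V] {σ : Equiv.Perm V} {w y : V}
    (h : σ.SameCycle w y) (p q : Fin 3) (a a' : V → Fin 3)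
    (h1 : ∀ x, σ.SameCycle w x → a x = p ∨ a x = q)
    (h1' : ∀ x, σ.SameCycle w x → a' x = p ∨ a' x = q)
    (h2 : ∀ x, σ.SameCycle w x → a (σ x) ≠ a x)
    (h2' : ∀ x, σ.SameCycle w x → a' (σ x) ≠ a' x)
    (hw : a w = a' w) : a y = a' y := by
  obtain ⟨n, rfl⟩ := h.exists_nat_pow_eq
  clear h
  induction n with
  | zero => simpa using hw
  | succ n ih =>
    rw [pow_succ', Equiv.Perm.mul_apply]
    have hs : σ.SameCycle w ((σ ^ n) w) := by simp [Equiv.Perm.SameCycle.refl]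
    have hs' : σ.SameCycle w (σ ((σ ^ n) w)) := by simp [Equiv.Perm.SameCycle.refl]
    have e1 := h1 _ hs
    have e2 := h1 _ hs'
    have e3 := h1' _ hs'
    have e4 := h2 _ hs
    have e5 := h2' _ hs
    grind

/-- The colouring `a` with the colour of the `μ`-orbit of `x` changed to `k`. -/
def recolor {V : Type*} [DecidableEq V] (μ : V → V) (a : V → Fin 3) (x : V) (k : Fin 3) :
    V → Fin 3 := fun y => if y = x ∨ y = μ x then k else a y

section
variable {V : Type*} [DecidableEq V] {σ : Equiv.Perm V} {μ : V → V}

theorem recolor_inv (hμ : ∀ x, μ (μ x) = x) {a : V → Fin 3} (ha : ∀ x, a (μ x) = a x) (x : V)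
    (k : Fin 3) (y : V) : recolor μ a x k (μ y) = recolor μ a x k y := by
  have e1 : μ y = x ↔ y = μ x := ⟨fun h => by rw [← h, hμ], fun h => by rw [h, hμ]⟩
  have e2 : μ y = μ x ↔ y = x := ⟨fun h => by rw [← hμ y, h, hμ], fun h => by rw [h]⟩
  simp only [recolor, e1, e2, or_comm, ha]

theorem recolor_self (a : V → Fin 3) (x : V) (k : Fin 3) : recolor μ a x k x = k := by
  simp [recolor]

theorem recolor_mate (a : V → Fin 3) (x : V) (k : Fin 3) : recolor μ a x k (μ x) = k := by
  simp [recolor]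

theorem recolor_of_ne {a : V → Fin 3} {x y : V} {k : Fin 3} (h1 : y ≠ x) (h2 : y ≠ μ x) :
    recolor μ a x k y = a y := by
  simp [recolor, h1, h2]

end

/-! ### Recolouring one or two cycles -/

theorem sameCycle_induction {V : Type*} [Finite V] {σ : Equiv.Perm V} {x y : V}
    (h : σ.SameCycle x y) (P : V → Prop) (hx : P x) (hs : ∀ z, P z → P (σ z)) : P y := by
  obtain ⟨n, rfl⟩ := h.exists_nat_pow_eq
  clear h
  induction n with
  | zero => simpa using hx
  | succ n ih => rw [pow_succ', Equiv.Perm.mul_apply]; exact hs _ ih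

theorem mem_of_pow_three {V : Type*} [Finite V] {σ : Equiv.Perm V} {x y : V}
    (h : σ.SameCycle x y) (h3 : σ (σ (σ x)) = x) : y = x ∨ y = σ x ∨ y = σ (σ x) := by
  refine sameCycle_induction h (fun y => y = x ∨ y = σ x ∨ y = σ (σ x)) (Or.inl rfl) ?_
  rintro z (rfl | rfl | rfl) <;> simp [h3]

theorem mem_of_pow_four {V : Type*} [Finite V] {σ : Equiv.Perm V} {x y : V}
    (h : σ.SameCycle x y) (h4 : σ (σ (σ (σ x))) = x) :
    y = x ∨ y = σ x ∨ y = σ (σ x) ∨ y = σ (σ (σ x)) := by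
  refine sameCycle_induction h
    (fun y => y = x ∨ y = σ x ∨ y = σ (σ x) ∨ y = σ (σ (σ x))) (Or.inl rfl) ?_
  rintro z (rfl | rfl | rfl | rfl) <;> simp [h4]

/-- Cycles of length at least 3 have a point different from `x` and from any given `y`. -/
theorem exists_third {V : Type*} {σ : Equiv.Perm V} (h1 : ∀ x, σ x ≠ x) (h2 : ∀ x, σ (σ x) ≠ x)
    (x y : V) : ∃ z, σ.SameCycle x z ∧ z ≠ x ∧ z ≠ y := by
  by_cases h : σ x = y
  · exact ⟨σ (σ x), by simp [Equiv.Perm.SameCycle.refl], h2 x, by rw [← h]; exact h1 _⟩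
  · exact ⟨σ x, by simp [Equiv.Perm.SameCycle.refl], h1 x, h⟩

/-- The `σ`-cycle of `x` meets at least three orbits of `μ`: that of `x` and those of `y` and `z`.
-/
def ThreeBlocks {V : Type*} (σ : Equiv.Perm V) (μ : V → V) (x : V) : Prop :=
  ∃ y z, σ.SameCycle x y ∧ σ.SameCycle x z ∧ y ≠ x ∧ y ≠ μ x ∧ z ≠ x ∧ z ≠ μ x ∧ z ≠ y ∧ z ≠ μ y

/-- `μ` is an involution, possibly with fixed points, all cycles of `σ` have length at least 3,
and each of them meets at least three orbits of `μ`. -/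
structure BlockData {V : Type*} (σ : Equiv.Perm V) (μ : V → V) : Prop where
  inv : ∀ x, μ (μ x) = x
  ne1 : ∀ x, σ x ≠ x
  ne2 : ∀ x, σ (σ x) ≠ x
  three : ∀ x, ThreeBlocks σ μ x

/-- If all vertices of a cycle satisfy `pre` and its matching edges are not all of one colour,
then a labelling can fail to exist only if exactly two colours occur and they alternate around the
cycle. -/
theorem not_lab_alternating {V : Type*} {σ : Equiv.Perm V} {μ : V → V} (H : BlockData σ μ)
    {x₀ y₁ y₂ : V} {pre : V → Prop} {a : V → Fin 3}
    (hn : ¬ Lab σ x₀ pre a) (hpre : ∀ x, σ.SameCycle x₀ x → pre x)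
    (h1 : σ.SameCycle x₀ y₁) (h2 : σ.SameCycle x₀ y₂) (hne : a y₁ ≠ a y₂) :
    (∀ x, σ.SameCycle x₀ x → a x = a y₁ ∨ a x = a y₂) ∧
      ∀ x, σ.SameCycle x₀ x → a (σ x) ≠ a x := by
  refine ⟨fun x hx => ?_, fun x hx he => hn ?_⟩
  · by_contra hc
    push Not at hc
    exact hn (lab_three y₁ y₂ x h1 h2 hx hne hc.1 hc.2)
  · have hσx : σ.SameCycle x₀ (σ x) := by simpa using hx
    have : ∃ y, σ.SameCycle x₀ y ∧ a y ≠ a (σ x) := by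
      by_cases h : a y₁ = a (σ x)
      · exact ⟨y₂, h2, by rw [← h]; exact hne.symm⟩
      · exact ⟨y₁, h1, h⟩
    obtain ⟨y, hy, hya⟩ := this
    exact lab_two (σ x) y hσx hy (hpre _ hσx) (by simpa using (H.ne1 x).symm)
      (by simpa using he) hya

section
variable {V : Type*} [Finite V] [DecidableEq V] {σ : Equiv.Perm V} {μ : V → V}

/-- On the cycle of `x` there are two consecutive vertices outside the `μ`-orbit of `x`, unless
the cycle is a 4-cycle having `x` and `μ x` as opposite vertices. -/
theorem adjacent_or_diag (H : BlockData σ μ) (x : V) :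
    (∃ w, σ.SameCycle x w ∧ w ≠ x ∧ w ≠ μ x ∧ σ w ≠ x ∧ σ w ≠ μ x) ∨
      (μ x = σ (σ x) ∧ σ (σ (σ (σ x))) = x) := by
  have e1 : σ.SameCycle x (σ x) := by simp [Equiv.Perm.SameCycle.refl]
  have e2 : σ.SameCycle x (σ (σ x)) := by simp [Equiv.Perm.SameCycle.refl]
  have e3 : σ.SameCycle x (σ (σ (σ x))) := by simp [Equiv.Perm.SameCycle.refl]
  have n1 := H.ne1
  have n2 := H.ne2
  obtain ⟨y, z, hy, hz, h1, h2, h3, h4, h5, h6⟩ := H.three x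
  by_cases ha : μ x = σ x
  · refine Or.inl ⟨σ (σ x), e2, n2 x, by rw [ha]; exact n1 _, fun h => ?_, by rw [ha]; exact n2 _⟩
    have := mem_of_pow_three hy h
    have := mem_of_pow_three hz h
    grind
  · by_cases hb : μ x = σ (σ x)
    · by_cases hc : σ (σ (σ (σ x))) = x
      · exact Or.inr ⟨hb, hc⟩
      · refine Or.inl ⟨σ (σ (σ x)), e3, fun h => ?_, by rw [hb]; exact n1 _, hc,
          by rw [hb]; exact n2 _⟩
        have := mem_of_pow_three hy h
        have := mem_of_pow_three hz h
        grind
    · exact Or.inl ⟨σ x, e1, n1 x, Ne.symm ha, n2 x, Ne.symm hb⟩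

/-- A 4-cycle whose matching edges all have the same colour can be labelled if the two neighbours
of `x` satisfy `pre`: keep `l = a` at `x` and at the opposite vertex, and give the two neighbours
the two remaining colours. -/
theorem lab_diag (H : BlockData σ μ) (x : V) (pre : V → Prop) (a : V → Fin 3)
    (h4 : σ (σ (σ (σ x))) = x) (ha : ∀ y, σ.SameCycle x y → a y = a x)
    (hp1 : pre (σ x)) (hp3 : pre (σ (σ (σ x)))) : Lab σ x pre a := by
  obtain ⟨p, hp, -⟩ := fin3_exists (a x) (a x)
  obtain ⟨q, hq, hqp⟩ := fin3_exists (a x) p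
  have e1 : σ.SameCycle x (σ x) := by simp [Equiv.Perm.SameCycle.refl]
  have e2 : σ.SameCycle x (σ (σ x)) := by simp [Equiv.Perm.SameCycle.refl]
  have e3 : σ.SameCycle x (σ (σ (σ x))) := by simp [Equiv.Perm.SameCycle.refl]
  have n1 := H.ne1
  have n2 := H.ne2
  have n3 : σ (σ (σ x)) ≠ x := fun h => n1 x (by rw [h] at h4; exact h4)
  let l : V → Fin 3 := fun y => if y = σ x then p else if y = σ (σ (σ x)) then q else a x
  have l0 : l x = a x := by simp only [l]; rw [if_neg (n1 x).symm, if_neg n3.symm]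
  have l1 : l (σ x) = p := by simp [l]
  have l2 : l (σ (σ x)) = a x := by
    simp only [l]; rw [if_neg (n1 _), if_neg (n1 _).symm]
  have l3 : l (σ (σ (σ x))) = q := by
    simp [l, n2]
  refine ⟨l, fun y hy => ?_, fun k => ?_⟩
  · rcases mem_of_pow_four hy h4 with h | h | h | h
    · subst h; exact Or.inl l0
    · refine Or.inr ⟨?_, h ▸ hp1⟩
      rw [ha y hy, h, Equiv.symm_apply_apply, l0]
    · exact Or.inl (by rw [ha y hy, h, l2])
    · refine Or.inr ⟨?_, h ▸ hp3⟩
      rw [ha y hy, h, Equiv.symm_apply_apply, l2]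
  · rcases fin3_cover (a x) p q k hp.symm hq hqp with h | h | h
    exacts [⟨x, .refl _ _, l0.trans h.symm⟩, ⟨_, e1, l1.trans h.symm⟩, ⟨_, e3, l3.trans h.symm⟩]

/-- The step for one cycle. Let the set `W` contain the cycle of `x`, and the mate of `x`. Colours
of the matching edges inside `W` may be changed, those of all others are prescribed, and the
vertices matched to the outside of `W` satisfy `pre`. Then the cycle of `x` can be labelled. -/
theorem extend_one (H : BlockData σ μ) (x : V) (W : Set V) (hxW : μ x ∈ W)
    (hW : ∀ y, σ.SameCycle x y → y ∈ W)
    (a₀ : V → Fin 3) (ha₀ : ∀ y, a₀ (μ y) = a₀ y) :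
    ∃ a : V → Fin 3, (∀ y, a (μ y) = a y) ∧ (∀ y, y ∉ W ∨ μ y ∉ W → a y = a₀ y) ∧
      Lab σ x (fun y => μ y ∉ W) a := by
  have hx := Equiv.Perm.SameCycle.refl σ x
  have hxx := hW x hx
  have keep : ∀ (b : V → Fin 3) (z : V) (k : Fin 3), z ∈ W → μ z ∈ W →
      ∀ y, y ∉ W ∨ μ y ∉ W → recolor μ b z k y = b y := by
    intro b z k hz hμz y hy
    apply recolor_of_ne
    · rintro rfl
      rcases hy with h | h <;> contradiction
    · rintro rfl
      rw [H.inv] at hy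
      rcases hy with h | h <;> contradiction
  obtain ⟨p, q, hp, hq, hpx, hpμ, hqx, hqμ, hqp, hqμp⟩ := H.three x
  -- If a second orbit inside `W` meets the cycle, then two orbits can be recoloured freely and a
  -- third one supplies the third colour.
  by_cases h : ∃ y, σ.SameCycle x y ∧ y ≠ x ∧ y ≠ μ x ∧ μ y ∈ W
  · obtain ⟨y, hy, hyx, hyμ, hyW⟩ := h
    obtain ⟨z, hz, hzx, hzμ, hzy, hzμy⟩ : ∃ z, σ.SameCycle x z ∧ z ≠ x ∧ z ≠ μ x ∧ z ≠ y ∧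
        z ≠ μ y := by
      by_cases h1 : p = y
      · exact ⟨q, hq, hqx, hqμ, h1 ▸ hqp, h1 ▸ hqμp⟩
      · by_cases h2 : p = μ y
        · refine ⟨q, hq, hqx, hqμ, ?_, h2 ▸ hqp⟩
          rw [h2, H.inv] at hqμp
          exact hqμp
        · exact ⟨p, hp, hpx, hpμ, h1, h2⟩
    obtain ⟨s, hs, -⟩ := fin3_exists (a₀ z) (a₀ z)
    obtain ⟨t, ht, hts⟩ := fin3_exists (a₀ z) s
    refine ⟨recolor μ (recolor μ a₀ x s) y t, recolor_inv H.inv (recolor_inv H.inv ha₀ _ _) _ _,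
      fun w hw => ?_, ?_⟩
    · rw [keep _ _ _ (hW y hy) hyW _ hw, keep _ _ _ hxx hxW _ hw]
    · have hx1 : recolor μ (recolor μ a₀ x s) y t x = s := by
        rw [recolor_of_ne hyx.symm (fun h => hyμ (by rw [h, H.inv])), recolor_self]
      have hy1 : recolor μ (recolor μ a₀ x s) y t y = t := recolor_self _ _ _
      have hz1 : recolor μ (recolor μ a₀ x s) y t z = a₀ z := by
        rw [recolor_of_ne hzy hzμy, recolor_of_ne hzx hzμ]
      exact lab_three z x y hz hx hy (by rw [hz1, hx1]; exact hs.symm) (by rwa [hy1, hz1])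
        (by rwa [hy1, hx1])
  · push Not at h
    -- All vertices of the cycle outside the orbit of `x` now satisfy `pre`. If their colours
    -- differ, a third colour at `x` suffices; if not, consecutive vertices of equal colour are
    -- used, and the exceptional 4-cycle is made monochromatic.
    by_cases h2 : ∃ y z, σ.SameCycle x y ∧ σ.SameCycle x z ∧ y ≠ x ∧ y ≠ μ x ∧ z ≠ x ∧ z ≠ μ x ∧
        a₀ y ≠ a₀ z
    · obtain ⟨y, z, hy, hz, hyx, hyμ, hzx, hzμ, hyz⟩ := h2
      obtain ⟨s, hs1, hs2⟩ := fin3_exists (a₀ y) (a₀ z)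
      refine ⟨recolor μ a₀ x s, recolor_inv H.inv ha₀ _ _, keep _ _ _ hxx hxW, ?_⟩
      refine lab_three y z x hy hz hx ?_ ?_ ?_
      · rwa [recolor_of_ne hyx hyμ, recolor_of_ne hzx hzμ]
      · rwa [recolor_of_ne hyx hyμ, recolor_self]
      · rwa [recolor_of_ne hzx hzμ, recolor_self]
    · push Not at h2
      rcases adjacent_or_diag H x with ⟨w, hw, hwx, hwμ, hσx, hσμ⟩ | ⟨hd1, hd2⟩
      · obtain ⟨s, hs, -⟩ := fin3_exists (a₀ w) (a₀ w)
        have hσw : σ.SameCycle x (σ w) := by simpa using hw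
        have he := h2 w (σ w) hw hσw hwx hwμ hσx hσμ
        refine ⟨recolor μ a₀ x s, recolor_inv H.inv ha₀ _ _, keep _ _ _ hxx hxW, ?_⟩
        refine lab_two (σ w) x hσw hx (h _ hσw hσx hσμ) ?_ ?_ ?_
        · simpa using (H.ne1 w).symm
        · rw [Equiv.symm_apply_apply, recolor_of_ne hσx hσμ, recolor_of_ne hwx hwμ, he]
        · rw [recolor_of_ne hσx hσμ, recolor_self, ← he]; exact hs
      · have n1 : σ x ≠ μ x := by rw [hd1]; exact (H.ne1 _).symm
        have e1 : σ.SameCycle x (σ x) := by simp [Equiv.Perm.SameCycle.refl]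
        have e3 : σ.SameCycle x (σ (σ (σ x))) := by simp [Equiv.Perm.SameCycle.refl]
        have n3 : σ (σ (σ x)) ≠ x := fun h => H.ne1 x (by rw [h] at hd2; exact hd2)
        have n3' : σ (σ (σ x)) ≠ μ x := by rw [hd1]; exact H.ne1 _
        refine ⟨recolor μ a₀ x (a₀ (σ x)), recolor_inv H.inv ha₀ _ _, keep _ _ _ hxx hxW, ?_⟩
        refine lab_diag H x _ _ hd2 ?_ (h _ e1 (H.ne1 x) n1) (h _ e3 n3 n3')
        intro y hy
        rw [recolor_self]
        by_cases hyx : y = x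
        · rw [hyx, recolor_self]
        · by_cases hyμ : y = μ x
          · rw [hyμ, recolor_mate]
          · rw [recolor_of_ne hyx hyμ]
            exact h2 _ _ hy e1 hyx hyμ (H.ne1 x) n1

/-- The step for two cycles joined by the matching edge at `u`, where no matching edge inside `W`
at these cycles has both ends in the same cycle or leads to a third cycle. The vertices of the
second cycle that are matched into the first one satisfy its `pre`, since the first cycle will get
the smaller rank. -/
theorem extend_two (H : BlockData σ μ) (u : V) (W : Set V) (huW : ∀ y, σ.SameCycle u y → y ∈ W)
    (hrW : ∀ y, σ.SameCycle (μ u) y → y ∈ W)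
    (hu : ∀ y, σ.SameCycle u y → ¬ σ.SameCycle u (μ y))
    (hu' : ∀ y, σ.SameCycle u y → μ y ∈ W → σ.SameCycle (μ u) (μ y))
    (hr' : ∀ y, σ.SameCycle (μ u) y → μ y ∈ W → σ.SameCycle u (μ y))
    (a₀ : V → Fin 3) (ha₀ : ∀ y, a₀ (μ y) = a₀ y) :
    ∃ a : V → Fin 3, (∀ y, a (μ y) = a y) ∧ (∀ y, y ∉ W ∨ μ y ∉ W → a y = a₀ y) ∧
      Lab σ u (fun y => μ y ∉ W) a ∧
      Lab σ (μ u) (fun y => μ y ∉ W ∨ σ.SameCycle u (μ y)) a := by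
  have hu0 := Equiv.Perm.SameCycle.refl σ u
  have hr0 := Equiv.Perm.SameCycle.refl σ (μ u)
  have huu := huW u hu0
  have hrr := hrW _ hr0
  have hdis : ∀ y z, σ.SameCycle u y → σ.SameCycle (μ u) z → z ≠ y := by
    rintro y z hy hz rfl
    exact hu u hu0 (hy.trans hz.symm)
  have keep : ∀ (b : V → Fin 3) (z : V) (k : Fin 3), z ∈ W → μ z ∈ W →
      ∀ y, y ∉ W ∨ μ y ∉ W → recolor μ b z k y = b y := by
    intro b z k hz hμz y hy
    apply recolor_of_ne
    · rintro rfl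
      rcases hy with h | h <;> contradiction
    · rintro rfl
      rw [H.inv] at hy
      rcases hy with h | h <;> contradiction
  have hpre : ∀ y, σ.SameCycle (μ u) y → μ y ∉ W ∨ σ.SameCycle u (μ y) := by
    intro y hy
    by_cases h : μ y ∈ W
    · exact Or.inr (hr' y hy h)
    · exact Or.inl h
  -- If a second matching edge joins the two cycles, the two edges get colours `s` and `t`, which
  -- together with the colour at `z` show three colours on the first cycle.
  by_cases h : ∃ x, σ.SameCycle u x ∧ x ≠ u ∧ μ x ∈ W
  · obtain ⟨x, hx, hxu, hxW⟩ := h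
    have hμx := hu' x hx hxW
    obtain ⟨z, hz, hzu, hzx⟩ := exists_third H.ne1 H.ne2 u x
    obtain ⟨w, hw, hwu, hwx⟩ := exists_third H.ne1 H.ne2 (μ u) (μ x)
    obtain ⟨s, hs, -⟩ := fin3_exists (a₀ z) (a₀ z)
    obtain ⟨t, ht, hts⟩ := fin3_exists (a₀ z) s
    have hxμu : x ≠ μ u := (hdis x _ hx hr0).symm
    have huμx : u ≠ μ x := (hdis u _ hu0 hμx).symm
    have hzμu : z ≠ μ u := (hdis z _ hz hr0).symm
    have hzμx : z ≠ μ x := (hdis z _ hz hμx).symm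
    have hwu' : w ≠ u := hdis u _ hu0 hw
    have hwx' : w ≠ x := hdis x _ hx hw
    have hinv : ∀ s t, ∀ y, recolor μ (recolor μ a₀ u s) x t (μ y) =
        recolor μ (recolor μ a₀ u s) x t y := fun s t =>
      recolor_inv H.inv (recolor_inv H.inv ha₀ _ _) _ _
    have hkeep : ∀ s t, ∀ y, y ∉ W ∨ μ y ∉ W →
        recolor μ (recolor μ a₀ u s) x t y = a₀ y := fun s t y hy => by
      rw [keep _ _ _ (huW x hx) hxW _ hy, keep _ _ _ huu hrr _ hy]
    have vu : ∀ s t, recolor μ (recolor μ a₀ u s) x t u = s := fun s t => by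
      rw [recolor_of_ne hxu.symm huμx, recolor_self]
    have vx : ∀ s t, recolor μ (recolor μ a₀ u s) x t x = t := fun s t => recolor_self _ _ _
    have vz : ∀ s t, recolor μ (recolor μ a₀ u s) x t z = a₀ z := fun s t => by
      rw [recolor_of_ne hzx hzμx, recolor_of_ne hzu hzμu]
    have vw : ∀ s t, recolor μ (recolor μ a₀ u s) x t w = a₀ w := fun s t => by
      rw [recolor_of_ne hwx' hwx, recolor_of_ne hwu' hwu]
    have vμu : ∀ s t, recolor μ (recolor μ a₀ u s) x t (μ u) = s := fun s t => by
      rw [hinv, vu]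
    have vμx : ∀ s t, recolor μ (recolor μ a₀ u s) x t (μ x) = t := fun s t => by
      rw [hinv, vx]
    by_cases hl : Lab σ (μ u) (fun y => μ y ∉ W ∨ σ.SameCycle u (μ y))
        (recolor μ (recolor μ a₀ u s) x t)
    · exact ⟨_, hinv s t, hkeep s t, lab_three z u x hz hu0 hx (by rw [vz, vu]; exact hs.symm)
        (by rwa [vx, vz]) (by rwa [vx, vu]), hl⟩
    · -- The second cycle alternates between `s` and `t`. After exchanging the two colours it
      -- cannot alternate again, because the colour at the third vertex `w` is unchanged.
      refine ⟨_, hinv t s, hkeep t s, lab_three z u x hz hu0 hx (by rw [vz, vu]; exact ht.symm)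
        (by rwa [vx, vz]) (by rw [vx, vu]; exact hts.symm), ?_⟩
      by_contra hl'
      have A := not_lab_alternating H hl hpre hr0 hμx (by rw [vμu, vμx]; exact hts.symm)
      have B := not_lab_alternating H hl' hpre hr0 hμx (by rw [vμu, vμx]; exact hts)
      simp only [vμu, vμx] at A B
      have := alternating_unique hw.symm s t (recolor μ (recolor μ a₀ u s) x t)
        (recolor μ (recolor μ a₀ u t) x s) (fun y hy => A.1 y (hw.trans hy))
        (fun y hy => (B.1 y (hw.trans hy)).symm) (fun y hy => A.2 y (hw.trans hy))
        (fun y hy => B.2 y (hw.trans hy)) (by rw [vw, vw])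
      rw [vμu, vμu] at this
      exact hts this.symm
  · -- If `u` is the only such vertex, each of the two cycles excludes at most one colour.
    push Not at h
    obtain ⟨b₁, hb₁⟩ := lab_one_free (pre := fun y => μ y ∉ W) H.ne1 H.ne2 a₀ u hu0 h
    obtain ⟨b₂, hb₂⟩ := lab_one_free (pre := fun y => μ y ∉ W ∨ σ.SameCycle u (μ y)) H.ne1 H.ne2 a₀
      (μ u) hr0 (fun y hy _ => hpre y hy)
    obtain ⟨k, hk1, hk2⟩ := fin3_exists b₁ b₂
    refine ⟨recolor μ a₀ u k, recolor_inv H.inv ha₀ _ _, keep _ _ _ huu hrr, hb₁ _ ?_ ?_,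
      hb₂ _ ?_ ?_⟩
    · exact fun y hy hyu => recolor_of_ne hyu (hdis y _ hy hr0).symm
    · rwa [recolor_self]
    · exact fun y hy hyr => recolor_of_ne (hdis u _ hu0 hy) hyr
    · rwa [recolor_mate]

end

/-! ### The greedy construction of the labelling -/

/-- The set `W` is a union of cycles of `σ`, and every `μ`-invariant colouring `a₀` can be changed
on orbits contained in `W` to a colouring that admits on `W` labels `l` and ranks `r` as required,
where the vertices whose mate lies outside `W` carry no condition on ranks. -/
def Solvable {V : Type*} (σ : Equiv.Perm V) (μ : V → V) (W : Set V) : Prop :=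
  (∀ x, σ x ∈ W ↔ x ∈ W) ∧
    ∀ a₀ : V → Fin 3, (∀ x, a₀ (μ x) = a₀ x) →
      ∃ a : V → Fin 3, (∀ x, a (μ x) = a x) ∧ (∀ x, x ∉ W ∨ μ x ∉ W → a x = a₀ x) ∧
        ∃ (l : V → Fin 3) (r : V → ℕ), (∀ x, r (σ x) = r x) ∧
          (∀ x ∈ W, l x = a x ∨ (a x = l (σ.symm x) ∧ (μ x ∉ W ∨ r (μ x) < r x))) ∧
          ∀ x ∈ W, ∀ k, ∃ y, σ.SameCycle x y ∧ l y = k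

/-- A solvable set can be enlarged by a set `D` of cycles which can be labelled, with ranks 0 and
1, after a change of colours inside `W ∪ D`. The colours for `D` are chosen first, and the
solution on `W` for the resulting colouring affects only orbits contained in `W`. The ranks on `W`
are raised by 2, so a vertex of `W` with a mate in `D` has a mate of smaller rank. -/
theorem solvable_union {V : Type*} [Finite V] {σ : Equiv.Perm V} {μ : V → V} (W D : Set V)
    (hW : Solvable σ μ W) (hD : ∀ x, σ x ∈ D ↔ x ∈ D)
    (hdis : ∀ x ∈ D, x ∉ W)
    (hext : ∀ a₀ : V → Fin 3, (∀ x, a₀ (μ x) = a₀ x) →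
      ∃ a : V → Fin 3, (∀ x, a (μ x) = a x) ∧ (∀ x, x ∉ W ∪ D ∨ μ x ∉ W ∪ D → a x = a₀ x) ∧
        ∃ (l : V → Fin 3) (r : V → ℕ), (∀ x, r x < 2) ∧ (∀ x, r (σ x) = r x) ∧
          (∀ x ∈ D, l x = a x ∨
            (a x = l (σ.symm x) ∧ (μ x ∉ W ∪ D ∨ (μ x ∈ D ∧ r (μ x) < r x)))) ∧
          ∀ x ∈ D, ∀ k, ∃ y, σ.SameCycle x y ∧ l y = k) :
    Solvable σ μ (W ∪ D) := by
  classical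
  have hsc : ∀ S : Set V, (∀ x, σ x ∈ S ↔ x ∈ S) → ∀ x y, σ.SameCycle x y → x ∈ S → y ∈ S :=
    fun S hS x y hxy hx => sameCycle_induction hxy (· ∈ S) hx (fun z hz => (hS z).2 hz)
  have hsym : ∀ S : Set V, (∀ x, σ x ∈ S ↔ x ∈ S) → ∀ x, σ.symm x ∈ S ↔ x ∈ S :=
    fun S hS x => by rw [← hS, Equiv.apply_symm_apply]
  refine ⟨fun x => by simp only [Set.mem_union, hW.1, hD], fun a₀ ha₀ => ?_⟩
  obtain ⟨a₁, ha₁, hk₁, l₁, r₁, hr₁, hrσ₁, hl₁, hs₁⟩ := hext a₀ ha₀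
  obtain ⟨a₂, ha₂, hk₂, l₂, r₂, hrσ₂, hl₂, hs₂⟩ := hW.2 a₁ ha₁
  refine ⟨a₂, ha₂, fun x hx => ?_, fun x => if x ∈ W then l₂ x else l₁ x,
    fun x => if x ∈ W then r₂ x + 2 else r₁ x, fun x => ?_, fun x hx => ?_, fun x hx k => ?_⟩
  · rw [hk₂ x, hk₁ x hx]
    simp only [Set.mem_union] at hx
    tauto
  · simp only [hW.1, hrσ₁, hrσ₂]
  · simp only [hsym W hW.1]
    by_cases hxW : x ∈ W
    · simp only [hxW, if_true]
      refine (hl₂ x hxW).imp_right (And.imp_right fun h => ?_)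
      by_cases hm : μ x ∈ W
      · refine Or.inr ?_
        rw [if_pos hm]
        have := h.resolve_left (not_not.2 hm)
        omega
      · refine Or.inr ?_
        rw [if_neg hm]
        have := hr₁ (μ x)
        omega
    · have hxD : x ∈ D := hx.resolve_left hxW
      simp only [hxW, if_false]
      rw [hk₂ x (Or.inl hxW)]
      refine (hl₁ x hxD).imp_right (And.imp_right (Or.imp_right fun h => ?_))
      rw [if_neg (hdis _ h.1)]
      exact h.2
  · by_cases hxW : x ∈ W
    · obtain ⟨y, hy, hyk⟩ := hs₂ x hxW k
      exact ⟨y, hy, by simp only [if_pos (hsc W hW.1 x y hy hxW), hyk]⟩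
    · have hxD : x ∈ D := hx.resolve_left hxW
      obtain ⟨y, hy, hyk⟩ := hs₁ x hxD k
      exact ⟨y, hy, by simp only [if_neg (hdis y (hsc D hD x y hy hxD)), hyk]⟩

section
variable {V : Type*} [Finite V] [DecidableEq V] {σ : Equiv.Perm V} {μ : V → V}

/-- A cycle with a vertex matched into `W`, matched inside the cycle or fixed by `μ` can be added
to a solvable set `W`. -/
theorem solvable_add_one (H : BlockData σ μ) (W : Set V) (hW : Solvable σ μ W) (x : V)
    (hx : x ∉ W) (hμ : μ x ∈ W ∨ σ.SameCycle x (μ x)) :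
    Solvable σ μ (W ∪ {y | σ.SameCycle x y}) := by
  refine solvable_union W _ hW (fun y => by simp) ?_ ?_
  · intro y hy hyW
    exact hx (sameCycle_induction (Equiv.Perm.SameCycle.symm hy) (· ∈ W) hyW
      (fun z hz => (hW.1 z).2 hz))
  · intro a₀ ha₀
    obtain ⟨a, ha, hk, l, hl, hs⟩ := extend_one H x (W ∪ {y | σ.SameCycle x y}) hμ
      (fun y hy => Or.inr hy) a₀ ha₀
    exact ⟨a, ha, hk, l, fun _ => 0, by simp, by simp,
      fun y hy => (hl y hy).imp_right (And.imp_right Or.inl),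
      fun y hy k => (hs k).imp fun z hz => ⟨(Equiv.Perm.SameCycle.symm hy).trans hz.1, hz.2⟩⟩

/-- Two different cycles joined by a matching edge can be added to a solvable set `W` if no
matching edge at them leads into `W` or has both ends in one of them. -/
theorem solvable_add_two (H : BlockData σ μ) (W : Set V) (hW : Solvable σ μ W) (u : V)
    (hu : u ∉ W) (hμu : μ u ∉ W)
    (hu₁ : ∀ y, σ.SameCycle u y → μ y ∉ W ∧ ¬ σ.SameCycle u (μ y))
    (hr₁ : ∀ y, σ.SameCycle (μ u) y → μ y ∉ W ∧ ¬ σ.SameCycle (μ u) (μ y)) :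
    Solvable σ μ (W ∪ {y | σ.SameCycle u y ∨ σ.SameCycle (μ u) y}) := by
  classical
  have hnot : ∀ y, y ∉ W → ∀ z, σ.SameCycle y z → z ∉ W := fun y hy z hz hzW =>
    hy (sameCycle_induction hz.symm (· ∈ W) hzW (fun z hz => (hW.1 z).2 hz))
  have hur : ∀ y, σ.SameCycle (μ u) y → ¬ σ.SameCycle u y := fun y hy hy' =>
    (hu₁ u (.refl _ _)).2 (hy'.trans hy.symm)
  refine solvable_union W _ hW (fun y => by simp) ?_ ?_
  · rintro y (hy | hy)
    exacts [hnot u hu y hy, hnot _ hμu y hy]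
  · intro a₀ ha₀
    obtain ⟨a, ha, hk, ⟨l₁, hl₁, hs₁⟩, ⟨l₂, hl₂, hs₂⟩⟩ := extend_two H u
      (W ∪ {y | σ.SameCycle u y ∨ σ.SameCycle (μ u) y}) (fun y hy => Or.inr (Or.inl hy))
      (fun y hy => Or.inr (Or.inr hy)) (fun y hy => (hu₁ y hy).2)
      (fun y hy h => (h.resolve_left (hu₁ y hy).1).resolve_left (hu₁ y hy).2)
      (fun y hy h => (h.resolve_left (hr₁ y hy).1).resolve_right (hr₁ y hy).2) a₀ ha₀
    refine ⟨a, ha, hk, fun x => if σ.SameCycle u x then l₁ x else l₂ x,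
      fun x => if σ.SameCycle u x then 0 else 1, fun x => by dsimp only; split_ifs <;> omega,
      fun x => by simp, ?_, ?_⟩
    · rintro x (hx | hx)
      · simp only [Equiv.Perm.sameCycle_symm_apply_right, hx, if_true]
        exact (hl₁ x hx).imp_right (And.imp_right Or.inl)
      · simp only [Equiv.Perm.sameCycle_symm_apply_right, hur x hx, if_false]
        refine (hl₂ x hx).imp_right (And.imp_right (Or.imp_right fun h => ?_))
        exact ⟨Or.inl h, by simp [h]⟩
    · rintro x (hx | hx) k
      · obtain ⟨y, hy, hyk⟩ := hs₁ k
        exact ⟨y, hx.symm.trans hy, by simp only [if_pos hy, hyk]⟩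
      · obtain ⟨y, hy, hyk⟩ := hs₂ k
        exact ⟨y, hx.symm.trans hy, by simp only [if_neg (hur y hy), hyk]⟩

/-- A maximal solvable set is the whole vertex set, as otherwise one or two cycles could be added.
-/
theorem solvable_univ (H : BlockData σ μ) : Solvable σ μ Set.univ := by
  have h0 : Solvable σ μ ∅ := ⟨fun x => by simp, fun a₀ ha₀ =>
    ⟨a₀, ha₀, fun _ _ => rfl, a₀, fun _ => 0, by simp, by simp, by simp⟩⟩
  obtain ⟨W, hW, hmax⟩ := (Set.toFinite {W : Set V | Solvable σ μ W}).exists_maximal ⟨∅, h0⟩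
  have hcontra : ∀ D : Set V, Solvable σ μ (W ∪ D) → ∀ x ∈ D, x ∈ W := fun D hD x hx =>
    hmax hD Set.subset_union_left (Or.inr hx)
  have hone : ∀ x, x ∉ W → ¬ (μ x ∈ W ∨ σ.SameCycle x (μ x)) := fun x hx h =>
    hx (hcontra _ (solvable_add_one H W hW x hx h) x (.refl _ _))
  have hnot : ∀ y, y ∉ W → ∀ z, σ.SameCycle y z → z ∉ W := fun y hy z hz hzW =>
    hy (sameCycle_induction hz.symm (· ∈ W) hzW (fun z hz => (hW.1 z).2 hz))
  have hcyc : ∀ x, x ∉ W → ∀ y, σ.SameCycle x y → μ y ∉ W ∧ ¬ σ.SameCycle x (μ y) := by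
    intro x hx y hy
    have := hone y (hnot x hx y hy)
    exact ⟨fun h => this (Or.inl h), fun h => this (Or.inr (hy.symm.trans h))⟩
  by_cases hall : ∀ x, x ∈ W
  · rwa [← Set.eq_univ_of_forall hall]
  · push Not at hall
    obtain ⟨u, hu⟩ := hall
    have hμu : μ u ∉ W := (hcyc u hu u (.refl _ _)).1
    exact absurd (hcontra _ (solvable_add_two H W hW u hu hμu (hcyc u hu) (hcyc _ hμu)) u
      (Or.inl (.refl _ _))) hu

/-- The labelling from which the path-3-colouring is read off. -/
theorem exists_labelling (H : BlockData σ μ) :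
    ∃ (a l : V → Fin 3) (r : V → ℕ), (∀ x, a (μ x) = a x) ∧ (∀ x, r (σ x) = r x) ∧
      (∀ x, l x = a x ∨ (a x = l (σ.symm x) ∧ r (μ x) < r x)) ∧
      ∀ x k, ∃ y, σ.SameCycle x y ∧ l y = k := by
  obtain ⟨a, ha, -, l, r, hr, hl, hs⟩ := (solvable_univ H).2 (fun _ => 0) (fun _ => rfl)
  exact ⟨a, l, r, ha, hr, fun x => by simpa using hl x trivial, fun x => hs x trivial⟩
end

/-! ### Cycle covers as permutations, matchings as involutions, and kites -/

/-- A cycle cover is the set of edges `s(v, σ v)` of a permutation `σ` all of whose cycles have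
length at least 3. By double counting, any `k` edges of `C` have at least `k` end points, so the
marriage theorem of Hall assigns to each edge one of its ends, injectively and hence bijectively;
`σ v` is the other end of the edge assigned to `v`. It is injective because a vertex lies on only
two edges of `C`. -/
theorem exists_orientation {V : Type*} [Fintype V] [DecidableEq V] (C : Finset (Sym2 V))
    (hC : IsCycleCoverEdges C) :
    ∃ σ : Equiv.Perm V, (∀ x, σ x ≠ x) ∧ (∀ x, σ (σ x) ≠ x) ∧
      ∀ e, e ∈ C ↔ ∃ v, e = s(v, σ v) := by
  have hdeg : ∀ v, (C.filter (v ∈ ·)).card = 2 := by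
    intro v
    rw [← hC.2 v, ← Set.ncard_coe_finset]
    congr 1
    ext e
    simp
  have hends : ∀ e ∈ C, e.toFinset.card = 2 := fun e he =>
    Sym2.card_toFinset_of_not_isDiag e (hC.1 e he)
  have hhall : ∃ f : {e // e ∈ C} → V, Function.Injective f ∧ ∀ e, f e ∈ e.1.toFinset := by
    rw [← Finset.all_card_le_biUnion_card_iff_exists_injective]
    intro s
    have := Finset.card_mul_le_card_mul (s := s)
      (t := s.biUnion fun e : {e // e ∈ C} => e.1.toFinset) (fun e v => v ∈ e.1) (m := 2) (n := 2)
      ?_ ?_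
    · omega
    · intro e he
      rw [← hends e.1 e.2]
      refine Finset.card_le_card fun v hv => ?_
      rw [Finset.mem_bipartiteAbove]
      exact ⟨Finset.mem_biUnion.2 ⟨e, he, hv⟩, by simpa using hv⟩
    · intro v _
      rw [← hdeg v, ← Finset.card_map (Function.Embedding.subtype _)]
      refine Finset.card_le_card fun e he => ?_
      rw [Finset.mem_map] at he
      obtain ⟨e', he', rfl⟩ := he
      rw [Finset.mem_bipartiteBelow] at he'
      exact Finset.mem_filter.2 ⟨e'.2, he'.2⟩
  obtain ⟨f, hf, hfm⟩ := hhall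
  have hcard : Fintype.card {e // e ∈ C} = Fintype.card V := by
    rw [Fintype.card_coe, ← Finset.card_univ]
    have := Finset.card_mul_eq_card_mul (s := C) (t := (Finset.univ : Finset V))
      (fun e v => v ∈ e) (m := 2) (n := 2) ?_ ?_
    · omega
    · intro e he
      rw [← hends e he]
      congr 1
      ext v
      simp [Finset.mem_bipartiteAbove]
    · intro v _
      exact hdeg v
  have hbij := (Fintype.bijective_iff_injective_and_card f).2 ⟨hf, hcard⟩
  choose out hout using hbij.2
  have hmem : ∀ v, v ∈ (out v).1 := fun v => by
    have := hfm (out v)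
    rw [hout] at this
    simpa using this
  have hex : ∀ v, ∃ w, (out v).1 = s(v, w) := fun v => hmem v
  choose τ hτ using hex
  have hne : ∀ v, τ v ≠ v := fun v h => by
    have := hC.1 _ (out v).2
    rw [hτ, h] at this
    simp at this
  have hout_inj : ∀ v w, (out v).1 = (out w).1 → v = w := fun v w h => by
    rw [← hout v, ← hout w, Subtype.ext h]
  have hinj : Function.Injective τ := by
    intro v w hvw
    -- The edges assigned to `v`, to `w` and to their common image would be three edges of `C` at
    -- that image.
    by_contra hne'
    have hsub : ({(out v).1, (out w).1, (out (τ v)).1} : Finset (Sym2 V)) ⊆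
        C.filter (τ v ∈ ·) := by
      intro e he
      simp only [Finset.mem_insert, Finset.mem_singleton] at he
      rcases he with rfl | rfl | rfl
      · exact Finset.mem_filter.2 ⟨(out v).2, by rw [hτ]; simp⟩
      · exact Finset.mem_filter.2 ⟨(out w).2, by rw [hτ w, hvw]; simp⟩
      · exact Finset.mem_filter.2 ⟨(out _).2, hmem _⟩
    have hc := Finset.card_le_card hsub
    rw [hdeg, Finset.card_eq_three.2 ⟨_, _, _, fun h => hne' (hout_inj _ _ h),
      fun h => hne v (hout_inj _ _ h).symm,
      fun h => hne w (by rw [← hvw]; exact (hout_inj _ _ h).symm), rfl⟩] at hc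
    omega
  refine ⟨Equiv.ofBijective τ (Finite.injective_iff_bijective.1 hinj), hne, fun v h => ?_,
    fun e => ⟨fun he => ?_, ?_⟩⟩
  · simp only [Equiv.ofBijective_apply] at h
    have : (out (τ v)).1 = (out v).1 := by rw [hτ, hτ v, h, Sym2.eq_swap]
    exact hne v (hout_inj _ _ this)
  · refine ⟨f ⟨e, he⟩, ?_⟩
    rw [Equiv.ofBijective_apply, ← hτ, hf (hout (f ⟨e, he⟩))]
  · rintro ⟨v, rfl⟩
    rw [Equiv.ofBijective_apply, ← hτ]
    exact (out v).2

/-- A perfect matching is the set of edges `s(v, μ v)` of a fixed-point-free involution `μ`. -/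
theorem exists_mate {V : Type*} (M : Finset (Sym2 V)) (hM : IsPerfectMatchingEdges M) :
    ∃ μ : V → V, (∀ x, μ (μ x) = x) ∧ (∀ x, μ x ≠ x) ∧ ∀ e, e ∈ M ↔ ∃ v, e = s(v, μ v) := by
  have hex : ∀ v, ∃ w, s(v, w) ∈ M := by
    intro v
    obtain ⟨e, ⟨he, w, rfl⟩, -⟩ := hM.2 v
    exact ⟨w, he⟩
  choose μ hμ using hex
  have huniq : ∀ v e, e ∈ M → v ∈ e → e = s(v, μ v) := fun v e he hv =>
    (hM.2 v).unique ⟨he, hv⟩ ⟨hμ v, by simp⟩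
  refine ⟨μ, fun v => ?_, fun v h => ?_, fun e => ⟨fun he => ?_, ?_⟩⟩
  · have := huniq (μ v) _ (hμ v) (by simp)
    rw [Sym2.eq_swap] at this
    exact (Sym2.congr_right.1 this).symm
  · have := hM.1 _ (hμ v)
    rw [h] at this
    simp at this
  · induction e with
    | h v w => exact ⟨v, huniq v _ he (by simp)⟩
  · rintro ⟨v, rfl⟩
    exact hμ v

/-- The cycle of `v` is a kite, positioned so that the edge from `v` to `μ v` is one of the
matching edges in question: a triangle with matching edge from `v` to `σ v`, a 4-cycle with two
opposite sides in the matching, or a 4-cycle with both diagonals in the matching. -/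
def KiteAt {V : Type*} (σ : Equiv.Perm V) (μ : V → V) (v : V) : Prop :=
  (σ (σ (σ v)) = v ∧ μ v = σ v) ∨
    (σ (σ (σ (σ v))) = v ∧ μ v = σ v ∧ μ (σ (σ v)) = σ (σ (σ v))) ∨
    (σ (σ (σ (σ v))) = v ∧ μ v = σ (σ v) ∧ μ (σ v) = σ (σ (σ v)))

/-- It suffices to find three points of the cycle in different `μ`-orbits, not necessarily
including the base point. -/
theorem threeBlocks_of_triple {V : Type*} {σ : Equiv.Perm V} {μ : V → V} (hμ : ∀ x, μ (μ x) = x)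
    {x p q m : V} (hp : σ.SameCycle x p) (hq : σ.SameCycle x q) (hm : σ.SameCycle x m)
    (h1 : q ≠ p) (h2 : q ≠ μ p) (h3 : m ≠ p) (h4 : m ≠ μ p) (h5 : m ≠ q) (h6 : m ≠ μ q) :
    ThreeBlocks σ μ x := by
  by_cases hxp : x = p ∨ x = μ p
  · exact ⟨q, m, hq, hm, by grind, by grind, by grind, by grind, h5, h6⟩
  · by_cases hxq : x = q ∨ x = μ q
    · exact ⟨p, m, hp, hm, by grind, by grind, by grind, by grind, h3, h4⟩
    · exact ⟨p, q, hp, hq, by grind, by grind, by grind, by grind, h1, h2⟩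

section
variable {V : Type*} {σ : Equiv.Perm V} {μ : V → V}

theorem KiteAt.sameCycle {v : V} (h : KiteAt σ μ v) : σ.SameCycle v (μ v) := by
  rcases h with h | h | h
  · rw [h.2]; simp [Equiv.Perm.SameCycle.refl]
  · rw [h.2.1]; simp [Equiv.Perm.SameCycle.refl]
  · rw [h.2.1]; simp [Equiv.Perm.SameCycle.refl]

/-- A cycle meets three orbits of the matching involution or is a kite. If it has length at least
5, its first five points lie in at least three orbits of size at most 2; shorter cycles are
checked directly. -/
theorem threeBlocks_or_kite (hμ : ∀ x, μ (μ x) = x) (h1 : ∀ x, σ x ≠ x)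
    (h2 : ∀ x, σ (σ x) ≠ x) (x : V) :
    ThreeBlocks σ μ x ∨ ∃ v, σ.SameCycle x v ∧ KiteAt σ μ v := by
  have e0 := Equiv.Perm.SameCycle.refl σ x
  have e1 : σ.SameCycle x (σ x) := by simp [Equiv.Perm.SameCycle.refl]
  have e2 : σ.SameCycle x (σ (σ x)) := by simp [Equiv.Perm.SameCycle.refl]
  have e3 : σ.SameCycle x (σ (σ (σ x))) := by simp [Equiv.Perm.SameCycle.refl]
  have e4 : σ.SameCycle x (σ (σ (σ (σ x)))) := by simp [Equiv.Perm.SameCycle.refl]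
  have hs := σ.injective
  by_contra hcon
  push Not at hcon
  obtain ⟨hT, hK⟩ := hcon
  have key : ∀ p q m, σ.SameCycle x p → σ.SameCycle x q → σ.SameCycle x m →
      q ≠ p → m ≠ p → m ≠ q → q = μ p ∨ m = μ p ∨ m = μ q := by
    intro p q m hp hq hm n1 n2 n3
    by_contra hc
    push Not at hc
    exact hT (threeBlocks_of_triple hμ hp hq hm n1 hc.1 n2 hc.2.1 n3 hc.2.2)
  have k0 := hK _ e0
  have k1 := hK _ e1
  have k2 := hK _ e2
  have k3 := hK _ e3
  simp only [KiteAt, not_or, not_and] at k0 k1 k2 k3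
  have q012 := key _ _ _ e0 e1 e2 (h1 _) (h2 _) (h1 _)
  have q123 := key _ _ _ e1 e2 e3 (h1 _) (h2 _) (h1 _)
  have q234 := key _ _ _ e2 e3 e4 (h1 _) (h2 _) (h1 _)
  have n01 := h1 x
  have n12 := h1 (σ x)
  have n23 := h1 (σ (σ x))
  have n34 := h1 (σ (σ (σ x)))
  have n02 := h2 x
  have n13 := h2 (σ x)
  have n24 := h2 (σ (σ x))
  have q013 := key _ _ _ e0 e1 e3 (h1 _)
  have q023 := key _ _ _ e0 e2 e3 (h2 _)
  have q124 := key _ _ _ e1 e2 e4 (h1 _)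
  have q134 := key _ _ _ e1 e3 e4 (h2 _)
  have q014 := key _ _ _ e0 e1 e4 (h1 _)
  have q024 := key _ _ _ e0 e2 e4 (h2 _)
  by_cases h3 : σ (σ (σ x)) = x
  · grind
  · by_cases h4 : σ (σ (σ (σ x))) = x
    · grind
    · have h5 : σ (σ (σ (σ x))) ≠ σ x := fun h => h3 (hs h)
      have := hμ x
      have := hμ (σ x)
      have := hμ (σ (σ x))
      have := hμ (σ (σ (σ x)))
      have := hμ (σ (σ (σ (σ x))))
      grind

variable {C M : Finset (Sym2 V)}

theorem mk_mem_cover (hC : ∀ e, e ∈ C ↔ ∃ v, e = s(v, σ v)) (x y : V) :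
    s(x, y) ∈ C ↔ y = σ x ∨ x = σ y := by
  rw [hC]
  constructor
  · rintro ⟨v, hv⟩
    rcases Sym2.eq_iff.1 hv with ⟨rfl, rfl⟩ | ⟨rfl, rfl⟩
    exacts [Or.inl rfl, Or.inr rfl]
  · rintro (h | h)
    exacts [⟨x, by rw [h]⟩, ⟨y, by rw [h, Sym2.eq_swap]⟩]

theorem mk_mem_matching (hμ : ∀ x, μ (μ x) = x) (hM : ∀ e, e ∈ M ↔ ∃ v, e = s(v, μ v)) (x y : V) :
    s(x, y) ∈ M ↔ μ x = y := by
  rw [hM]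
  constructor
  · rintro ⟨v, hv⟩
    rcases Sym2.eq_iff.1 hv with ⟨rfl, rfl⟩ | ⟨rfl, rfl⟩
    exacts [rfl, hμ _]
  · rintro h
    exact ⟨x, by rw [h]⟩

/-- A 3-kite is the vertex set of a cycle of `σ` that contains a point satisfying `KiteAt`. -/
theorem kite_of_isThreeKite [Finite V] (hμ : ∀ x, μ (μ x) = x)
    (hC : ∀ e, e ∈ C ↔ ∃ v, e = s(v, σ v)) (hM : ∀ e, e ∈ M ↔ ∃ v, e = s(v, μ v))
    {x y z : V} (h : IsThreeKite C M x y z) :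
    (∃ v, σ.SameCycle x v ∧ KiteAt σ μ v) ∧
      ∀ w, σ.SameCycle x w ↔ w = x ∨ w = y ∨ w = z := by
  obtain ⟨n1, n2, n3, c1, c2, c3, m⟩ := h
  rw [mk_mem_cover hC] at c1 c2 c3
  simp only [mk_mem_matching hμ hM] at m
  have hs := σ.injective
  have main : ∀ x y z : V, y = σ x → z = σ y → x = σ z → (μ x = y ∨ μ y = z ∨ μ x = z) →
      (∃ v, σ.SameCycle x v ∧ KiteAt σ μ v) ∧ ∀ w, σ.SameCycle x w ↔ w = x ∨ w = y ∨ w = z := by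
    rintro x _ _ rfl rfl h3 m
    refine ⟨?_, fun w => ⟨fun hw => mem_of_pow_three hw h3.symm, ?_⟩⟩
    · rcases m with m | m | m
      · exact ⟨x, .refl _ _, Or.inl ⟨h3.symm, m⟩⟩
      · exact ⟨σ x, by simp [Equiv.Perm.SameCycle.refl], Or.inl ⟨by rw [← h3], m⟩⟩
      · refine ⟨σ (σ x), by simp [Equiv.Perm.SameCycle.refl], Or.inl ⟨by rw [← h3], ?_⟩⟩
        rw [← m, hμ, m, ← h3]
    · rintro (rfl | rfl | rfl) <;> simp [Equiv.Perm.SameCycle.refl]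
  -- The triangle is listed along `σ` or against it.
  by_cases h : y = σ x
  · exact main x y z h (by grind) (by grind)
      (by tauto)
  · have := main x z y (by grind) (by grind) (by grind) (by grind)
    refine ⟨this.1, fun w => ?_⟩
    rw [this.2, or_comm (a := w = z)]

/-- Two different matching edges inside `{x, y, z, t}` pair up these four vertices in one of three
ways. -/
theorem pairing_of_four (hμ : ∀ x, μ (μ x) = x) (hμ1 : ∀ x, μ x ≠ x) {x y z t a b : V}
    (a1 : a = x ∨ a = y ∨ a = z ∨ a = t) (a2 : μ a = x ∨ μ a = y ∨ μ a = z ∨ μ a = t)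
    (b1 : b = x ∨ b = y ∨ b = z ∨ b = t) (b2 : μ b = x ∨ μ b = y ∨ μ b = z ∨ μ b = t)
    (hab : b ≠ a) (hab' : b ≠ μ a) :
    (μ x = y ∧ μ z = t) ∨ (μ x = z ∧ μ y = t) ∨ (μ x = t ∧ μ y = z) := by
  have ha := hμ a
  have hb := hμ b
  have ha1 := hμ1 a
  have hb1 := hμ1 b
  have hab2 : μ b ≠ a := fun h => hab' (by rw [← h, hb])
  have hab3 : μ b ≠ μ a := fun h => hab (by rw [← ha, ← h, hb])
  clear hμ hμ1
  generalize hp : μ a = p at *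
  generalize hq : μ b = q at *
  rcases a1 with rfl | rfl | rfl | rfl <;> rcases a2 with rfl | rfl | rfl | rfl <;>
    rcases b1 with rfl | rfl | rfl | rfl <;> first | contradiction | skip
  all_goals rcases b2 with rfl | rfl | rfl | rfl <;> first | contradiction | simp [*]

theorem kite_of_four_cycle [Finite V] (hμ : ∀ x, μ (μ x) = x) {x y z t : V}
    (hy : y = σ x) (hz : z = σ y) (ht : t = σ z) (hx : x = σ t)
    (m : (μ x = y ∧ μ z = t) ∨ (μ x = z ∧ μ y = t) ∨ (μ x = t ∧ μ y = z)) :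
    (∃ v, σ.SameCycle x v ∧ KiteAt σ μ v) ∧
      ∀ w, σ.SameCycle x w ↔ w = x ∨ w = y ∨ w = z ∨ w = t := by
  subst hy hz ht
  refine ⟨?_, fun w => ⟨fun hw => mem_of_pow_four hw hx.symm, ?_⟩⟩
  · rcases m with m | m | m
    · exact ⟨x, .refl _ _, Or.inr (Or.inl ⟨hx.symm, m⟩)⟩
    · exact ⟨x, .refl _ _, Or.inr (Or.inr ⟨hx.symm, m⟩)⟩
    · refine ⟨σ x, by simp [Equiv.Perm.SameCycle.refl],
        Or.inr (Or.inl ⟨by rw [← hx], m.2, ?_⟩)⟩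
      rw [← m.1, hμ, m.1, ← hx]
  · rintro (rfl | rfl | rfl | rfl) <;> simp [Equiv.Perm.SameCycle.refl]

/-- A 4-kite is the vertex set of a cycle of `σ` that contains a point satisfying `KiteAt`. -/
theorem kite_of_isFourKite [Finite V] (hμ : ∀ x, μ (μ x) = x) (hμ1 : ∀ x, μ x ≠ x)
    (hC : ∀ e, e ∈ C ↔ ∃ v, e = s(v, σ v)) (hM : ∀ e, e ∈ M ↔ ∃ v, e = s(v, μ v))
    {x y z t : V} (h : IsFourKite C M x y z t) :
    (∃ v, σ.SameCycle x v ∧ KiteAt σ μ v) ∧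
      ∀ w, σ.SameCycle x w ↔ w = x ∨ w = y ∨ w = z ∨ w = t := by
  obtain ⟨hp, c1, c2, c3, c4, e₁, he₁, e₂, he₂, hne, hin₁, hin₂⟩ := h
  rw [mk_mem_cover hC] at c1 c2 c3 c4
  obtain ⟨a, rfl⟩ := (hM _).1 he₁
  obtain ⟨b, rfl⟩ := (hM _).1 he₂
  have hpair := pairing_of_four hμ hμ1 (hin₁ a (by simp)) (hin₁ (μ a) (by simp))
    (hin₂ b (by simp)) (hin₂ (μ b) (by simp)) (fun h => hne (by rw [h]))
    (fun h => hne (by rw [h, hμ, Sym2.eq_swap]))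
  have hs := σ.injective
  simp only [List.pairwise_cons, List.mem_cons, List.not_mem_nil, or_false, forall_eq_or_imp,
    forall_eq] at hp
  obtain ⟨⟨n1, n2, n3⟩, ⟨n4, n5⟩, n6, -⟩ := hp
  clear hin₁ hin₂ hne he₁ he₂ hC hM
  -- The 4-cycle is listed along `σ` or against it.
  by_cases h : y = σ x
  · exact kite_of_four_cycle hμ h (by grind) (by grind) (by grind) hpair
  · have hx := hμ x
    have hy := hμ y
    have hz := hμ z
    have := kite_of_four_cycle (σ := σ) hμ (x := x) (y := t) (z := z) (t := y)
      (by grind) (by grind) (by grind) (by grind) (by clear c1 c2 c3 c4 h; grind)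
    refine ⟨this.1, fun w => ?_⟩
    rw [this.2]
    constructor <;> rintro (h | h | h | h) <;> simp [h]

theorem isFourKite_of_cycle (h1 : ∀ x, σ x ≠ x) (h2 : ∀ x, σ (σ x) ≠ x)
    (hC : ∀ e, e ∈ C ↔ ∃ v, e = s(v, σ v)) {v : V} (h : σ (σ (σ (σ v))) = v)
    (m : ∃ p q, s(v, p) ∈ M ∧ s(q, σ (σ (σ v))) ∈ M ∧
      ((p = σ v ∧ q = σ (σ v)) ∨ (p = σ (σ v) ∧ q = σ v))) :
    IsFourKite C M v (σ v) (σ (σ v)) (σ (σ (σ v))) := by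
  have n3 : v ≠ σ (σ (σ v)) := fun h' => h1 v (by rw [h', h, ← h'])
  have n1 := (h1 v).symm
  have n2 := (h2 v).symm
  refine ⟨?_, ?_, ?_, ?_, ?_, ?_⟩
  · simp only [List.pairwise_cons, List.mem_cons, List.not_mem_nil, or_false, forall_eq_or_imp,
      forall_eq]
    exact ⟨⟨n1, n2, n3⟩, ⟨(h1 _).symm, (h2 _).symm⟩, (h1 _).symm, by simp⟩
  · rw [mk_mem_cover hC]; simp
  · rw [mk_mem_cover hC]; simp
  · rw [mk_mem_cover hC]; simp
  · rw [mk_mem_cover hC]; simp [h]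
  · obtain ⟨p, q, hp, hq, hpq⟩ := m
    refine ⟨_, hp, _, hq, ?_, ?_, ?_⟩
    · rw [Ne, Sym2.eq_iff]
      rcases hpq with ⟨rfl, rfl⟩ | ⟨rfl, rfl⟩ <;> tauto
    · rcases hpq with ⟨rfl, rfl⟩ | ⟨rfl, rfl⟩ <;> simp
    · rcases hpq with ⟨rfl, rfl⟩ | ⟨rfl, rfl⟩ <;> simp

/-- A point satisfying `KiteAt` spans, with its successors under `σ`, a 3-kite or a 4-kite. -/
theorem KiteAt.isKite (hμ : ∀ x, μ (μ x) = x) (h1 : ∀ x, σ x ≠ x) (h2 : ∀ x, σ (σ x) ≠ x)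
    (hC : ∀ e, e ∈ C ↔ ∃ v, e = s(v, σ v)) (hM : ∀ e, e ∈ M ↔ ∃ v, e = s(v, μ v))
    {v : V} (h : KiteAt σ μ v) :
    (μ v = σ v ∨ μ v = σ (σ v)) ∧
      (IsThreeKite C M v (σ v) (σ (σ v)) ∨
        IsFourKite C M v (σ v) (σ (σ v)) (σ (σ (σ v)))) := by
  rcases h with ⟨h, m⟩ | ⟨h, m⟩ | ⟨h, m⟩
  · refine ⟨Or.inl m, Or.inl ⟨(h1 _).symm, (h2 _).symm, (h1 _).symm, ?_, ?_, ?_, ?_⟩⟩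
    · rw [mk_mem_cover hC]; simp
    · rw [mk_mem_cover hC]; simp
    · rw [mk_mem_cover hC]; simp [h]
    · simp [mk_mem_matching hμ hM, m]
  · refine ⟨Or.inl m.1, Or.inr (isFourKite_of_cycle h1 h2 hC h ⟨σ v, σ (σ v), ?_, ?_, by simp⟩)⟩
    · rw [mk_mem_matching hμ hM, m.1]
    · rw [mk_mem_matching hμ hM, m.2]
  · refine ⟨Or.inr m.1, Or.inr (isFourKite_of_cycle h1 h2 hC h ⟨σ (σ v), σ v, ?_, ?_, by simp⟩)⟩
    · rw [mk_mem_matching hμ hM, m.1]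
    · rw [mk_mem_matching hμ hM, m.2]

end

/-! ### The colouring -/

section
variable {V : Type*} [Fintype V] [DecidableEq V] {σ : Equiv.Perm V} {μ : V → V}

/-- The colouring read off from a labelling: a cover edge from `v` to `σ v` gets the two colours
different from `l v`, and a remaining matching edge at `v` gets the colour `a v`. The remaining
matching edges, those of `M` not in `F`, are the non-trivial orbits of `μ`. -/
theorem pathColorable_of_blockData (H : BlockData σ μ) (C M F : Finset (Sym2 V))
    (hC : ∀ e, e ∈ C ↔ ∃ v, e = s(v, σ v)) (hFM : F ⊆ M)
    (hMF : ∀ e, (e ∈ M ∧ e ∉ F) ↔ ∃ v, e = s(v, μ v) ∧ μ v ≠ v) :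
    PathColorable 3 (fun e =>
      (if e ∈ C then 2 else 0) + (if e ∈ M then 1 else 0) - (if e ∈ F then 1 else 0)) := by
  classical
  obtain ⟨a, l, r, ha, hr, hl, hsee⟩ := exists_labelling H
  refine ⟨fun e => Finset.univ.filter fun k => (∃ v, e = s(v, σ v) ∧ l v ≠ k) ∨
    (∃ v, e = s(v, μ v) ∧ μ v ≠ v ∧ a v = k), fun e => ?_, fun k => ?_⟩
  · have hcov : ∀ v k, (∃ v', s(v, σ v) = s(v', σ v') ∧ l v' ≠ k) ↔ l v ≠ k := by
      refine fun v k => ⟨?_, fun h => ⟨v, rfl, h⟩⟩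
      rintro ⟨v', hv, hk⟩
      rcases Sym2.eq_iff.1 hv with ⟨rfl, -⟩ | ⟨h, h'⟩
      · exact hk
      · exact absurd (by rw [h', h]) (H.ne2 v)
    have hcov' : ∀ k, e ∉ C → ¬ ∃ v', e = s(v', σ v') ∧ l v' ≠ k := by
      rintro k he ⟨v, hv, -⟩
      exact he ((hC e).2 ⟨v, hv⟩)
    have hmat : ∀ v k, μ v ≠ v → ((∃ v', s(v, μ v) = s(v', μ v') ∧ μ v' ≠ v' ∧ a v' = k) ↔
        a v = k) := by
      refine fun v k hne => ⟨?_, fun h => ⟨v, rfl, hne, h⟩⟩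
      rintro ⟨v', hv, -, hk⟩
      rcases Sym2.eq_iff.1 hv with ⟨rfl, -⟩ | ⟨rfl, -⟩
      · exact hk
      · rw [← hk, ha]
    have hmat' : ∀ k, ¬ (e ∈ M ∧ e ∉ F) → ¬ ∃ v', e = s(v', μ v') ∧ μ v' ≠ v' ∧ a v' = k := by
      rintro k he ⟨v, hv, hne, -⟩
      exact he ((hMF e).2 ⟨v, hv, hne⟩)
    -- Both ends of a matching edge along the cycle have the same rank, so `l v = a v`, and the
    -- colour of the matching edge is the one missing on the two copies of the cover edge.
    have hloc : ∀ v, μ v = σ v → l v = a v := by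
      intro v hv
      rcases hl v with h | h
      · exact h
      · rw [hv, hr] at h
        exact absurd h.2 (lt_irrefl _)
    have card0 : ∀ c : Fin 3, (Finset.univ.filter fun k => c ≠ k).card = 2 := by decide
    have card1 : ∀ c : Fin 3, (Finset.univ.filter fun k => c = k).card = 1 := by decide
    have card2 : ∀ c : Fin 3, (Finset.univ.filter fun k => c ≠ k ∨ c = k).card = 3 := by decide
    by_cases heC : e ∈ C <;> by_cases heM : e ∈ M ∧ e ∉ F
    · obtain ⟨v, rfl⟩ := (hC e).1 heC
      obtain ⟨w, hw, hne⟩ := (hMF _).1 heM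
      have hlw : l v = a w := by
        rcases Sym2.eq_iff.1 hw with ⟨rfl, h⟩ | ⟨h, rfl⟩
        · exact hloc _ h.symm
        · rw [← ha, ← h]
          exact hloc v (by have := H.inv (σ v); rwa [← h] at this)
      simp only [hcov]
      simp only [hw, hmat w _ hne, hlw, card2]
      rw [← hw]
      simp [heC, heM]
    · obtain ⟨v, rfl⟩ := (hC e).1 heC
      simp only [hcov, hmat' _ heM, or_false, card0]
      by_cases h : s(v, σ v) ∈ F
      · simp [heC, h, hFM h]
      · have : s(v, σ v) ∉ M := fun h' => heM ⟨h', h⟩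
        simp [heC, h, this]
    · obtain ⟨w, rfl, hne⟩ := (hMF _).1 heM
      simp only [hcov' _ heC, hmat w _ hne, false_or, card1]
      simp [heC, heM]
    · simp only [hcov' _ heC, hmat' _ heM, or_false, Finset.filter_false, Finset.card_empty]
      by_cases h : e ∈ F
      · simp [heC, h, hFM h]
      · have : e ∉ M := fun h' => heM ⟨h', h⟩
        simp [heC, h, this]
  · refine isLinearForest_color σ μ H.inv a l r ha hr hl hsee k _ fun e he => ?_
    rw [Set.mem_ofPred_eq, Finset.mem_filter] at he
    rcases he.2 with h | ⟨v, hv, -, hk⟩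
    · exact Or.inl h
    · exact Or.inr ⟨v, hv, hk⟩

end

/-! ### The choice of the removed edges -/

/-- A choice of a point satisfying `KiteAt` on each cycle having such a point, depending only on
the cycle. -/
theorem exists_kite_choice {V : Type*} (σ : Equiv.Perm V) (μ : V → V) :
    ∃ g : V → V, (∀ x y, σ.SameCycle x y → g x = g y) ∧
      ∀ x, (∃ v, σ.SameCycle x v ∧ KiteAt σ μ v) → σ.SameCycle x (g x) ∧ KiteAt σ μ (g x) := by
  refine ⟨fun x => @Classical.epsilon V ⟨x⟩ fun v => σ.SameCycle x v ∧ KiteAt σ μ v,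
    fun x y hxy => ?_, fun x hx => @Classical.epsilon_spec V _ hx⟩
  have : (fun v => σ.SameCycle x v ∧ KiteAt σ μ v) = fun v => σ.SameCycle y v ∧ KiteAt σ μ v := by
    funext v
    rw [eq_iff_iff]
    exact ⟨fun h => ⟨hxy.symm.trans h.1, h.2⟩, fun h => ⟨hxy.trans h.1, h.2⟩⟩
  simp only [this]

/-- One can remove a single edge from each kite of the cycle cover `C` so that
the multigraph consisting of two copies of every edge of `C` and one copy of
every edge of `M`, minus one copy of each removed edge, is path-3-colorable. -/
theorem remove_one_edge_per_kite_path_three_colorable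
    {V : Type*} [Fintype V] [DecidableEq V] (n : ℕ)
    (hcard : Fintype.card V = n) (hn : 4 ≤ n) (heven : Even n)
    (C M : Finset (Sym2 V))
    (hC : IsCycleCoverEdges C) (hM : IsPerfectMatchingEdges M) :
    ∃ F : Finset (Sym2 V),
      F ⊆ C ∪ M ∧
      (∀ e ∈ F,
        (∃ x y z : V, IsThreeKite C M x y z ∧
          e ∈ edgesWithin (C ∪ M) {x, y, z}) ∨
        (∃ x y z t : V, IsFourKite C M x y z t ∧
          e ∈ edgesWithin (C ∪ M) {x, y, z, t})) ∧
      (∀ x y z : V, IsThreeKite C M x y z →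
        (F ∩ edgesWithin (C ∪ M) {x, y, z}).card = 1) ∧
      (∀ x y z t : V, IsFourKite C M x y z t →
        (F ∩ edgesWithin (C ∪ M) {x, y, z, t}).card = 1) ∧
      PathColorable 3 (fun e =>
        (if e ∈ C then 2 else 0) + (if e ∈ M then 1 else 0)
          - (if e ∈ F then 1 else 0)) := by
  classical
  obtain ⟨σ, h1, h2, hC⟩ := exists_orientation C hC
  obtain ⟨μ, hμ, hμ1, hM⟩ := exists_mate M hM
  obtain ⟨g, hg, hgk⟩ := exists_kite_choice σ μ
  have hMmem : ∀ v, s(v, μ v) ∈ M := fun v => (hM _).2 ⟨v, rfl⟩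
  -- From each kite, remove the matching edge at the chosen vertex of its cycle.
  obtain ⟨F, hF⟩ : ∃ F : Finset (Sym2 V), ∀ e, e ∈ F ↔
      ∃ x, (∃ v, σ.SameCycle x v ∧ KiteAt σ μ v) ∧ e = s(g x, μ (g x)) :=
    ⟨Finset.univ.filter _, fun e => Finset.mem_filter_univ e⟩
  have hFM : F ⊆ M := by
    intro e he
    obtain ⟨x, -, rfl⟩ := (hF e).1 he
    exact hMmem _
  have hinter : ∀ (x : V) (S : Finset V), (∃ v, σ.SameCycle x v ∧ KiteAt σ μ v) →
      (∀ w, w ∈ S ↔ σ.SameCycle x w) → (F ∩ edgesWithin (C ∪ M) S).card = 1 := by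
    intro x S hx hS
    rw [Finset.card_eq_one]
    refine ⟨s(g x, μ (g x)), ?_⟩
    ext e
    rw [Finset.mem_inter, Finset.mem_singleton, edgesWithin, Finset.mem_filter, hF]
    constructor
    · rintro ⟨⟨x', hx', rfl⟩, -, he⟩
      have h3 := (hS _).1 (Finset.mk_mem_sym2_iff.1 he).1
      rw [hg x x' (h3.trans (hgk x' hx').1.symm)]
    · rintro rfl
      obtain ⟨h3, h4⟩ := hgk x hx
      refine ⟨⟨x, hx, rfl⟩, Finset.mem_union_right _ (hMmem _), ?_⟩
      rw [Finset.mk_mem_sym2_iff, hS, hS]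
      exact ⟨h3, h3.trans h4.sameCycle⟩
  have hFx : ∀ x, s(x, μ x) ∈ F ↔
      (∃ v, σ.SameCycle x v ∧ KiteAt σ μ v) ∧ (x = g x ∨ x = μ (g x)) := by
    intro x
    rw [hF]
    constructor
    · rintro ⟨y, hy, h⟩
      obtain ⟨h3, h4⟩ := hgk y hy
      have hxy : σ.SameCycle y x ∧ (x = g y ∨ x = μ (g y)) := by
        rcases Sym2.eq_iff.1 h with ⟨rfl, -⟩ | ⟨rfl, -⟩
        · exact ⟨h3, Or.inl rfl⟩
        · exact ⟨h3.trans h4.sameCycle, Or.inr rfl⟩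
      rw [hg x y hxy.1.symm]
      exact ⟨⟨_, hxy.1.symm.trans h3, h4⟩, hxy.2⟩
    · rintro ⟨hx, h | h⟩
      · exact ⟨x, hx, by rw [← h]⟩
      · exact ⟨x, hx, by rw [← hμ (g x), ← h, hμ, Sym2.eq_swap]⟩
  -- The involution in which the ends of the removed edges are fixed points.
  let ν : V → V := fun x => if s(x, μ x) ∈ F then x else μ x
  have hν1 : ∀ x, s(x, μ x) ∈ F → ν x = x := fun x h => if_pos h
  have hν2 : ∀ x, s(x, μ x) ∉ F → ν x = μ x := fun x h => if_neg h
  have hν : ∀ x, ν (ν x) = x := by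
    intro x
    by_cases h : s(x, μ x) ∈ F
    · rw [hν1 x h, hν1 x h]
    · rw [hν2 x h, hν2, hμ]
      rwa [hμ, Sym2.eq_swap]
  have hthree : ∀ x, ThreeBlocks σ ν x := by
    intro x
    by_cases hx : ∃ v, σ.SameCycle x v ∧ KiteAt σ μ v
    · obtain ⟨h3, h4⟩ := hgk x hx
      have hgg : g (g x) = g x := (hg _ _ h3).symm
      have h5 : s(g x, μ (g x)) ∈ F := (hF _).2 ⟨x, hx, rfl⟩
      have h6 : s(μ (g x), μ (μ (g x))) ∈ F := by rwa [hμ, Sym2.eq_swap]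
      obtain ⟨m, hm, hm1, hm2⟩ := exists_third h1 h2 (g x) (μ (g x))
      -- The two ends of the removed edge have become singleton orbits, and there is a third vertex.
      exact threeBlocks_of_triple hν h3 (h3.trans h4.sameCycle) (h3.trans hm) (hμ1 _)
        (by rw [hν1 _ h5]; exact hμ1 _) hm1 (by rwa [hν1 _ h5]) hm2 (by rwa [hν1 _ h6])
    · have hcyc : ∀ y, σ.SameCycle x y → ν y = μ y := by
        intro y hy
        refine hν2 y fun h => hx ?_
        obtain ⟨v, hv, hk⟩ := ((hFx y).1 h).1
        exact ⟨v, hy.trans hv, hk⟩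
      rcases threeBlocks_or_kite hμ h1 h2 x with ⟨y, z, hy, hz, h⟩ | h
      · rw [← hcyc x (.refl _ _), ← hcyc y hy] at h
        exact ⟨y, z, hy, hz, h⟩
      · exact absurd h hx
  refine ⟨F, hFM.trans Finset.subset_union_right, ?_, ?_, ?_,
    pathColorable_of_blockData ⟨hν, h1, h2, hthree⟩ C M F hC hFM fun e => ?_⟩
  · intro e he
    obtain ⟨x, hx, rfl⟩ := (hF e).1 he
    obtain ⟨hk, h | h⟩ := (hgk x hx).2.isKite hμ h1 h2 hC hM
    · refine Or.inl ⟨_, _, _, h, Finset.mem_filter.2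
        ⟨Finset.mem_union_right _ (hMmem _), Finset.mk_mem_sym2_iff.2 ⟨by simp, ?_⟩⟩⟩
      rcases hk with hk | hk <;> simp [hk]
    · refine Or.inr ⟨_, _, _, _, h, Finset.mem_filter.2
        ⟨Finset.mem_union_right _ (hMmem _), Finset.mk_mem_sym2_iff.2 ⟨by simp, ?_⟩⟩⟩
      rcases hk with hk | hk <;> simp [hk]
  · intro x y z h
    obtain ⟨hk, hS⟩ := kite_of_isThreeKite hμ hC hM h
    exact hinter x _ hk fun w => by rw [hS]; simp
  · intro x y z t h
    obtain ⟨hk, hS⟩ := kite_of_isFourKite hμ hμ1 hC hM h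
    exact hinter x _ hk fun w => by rw [hS]; simp
  · constructor
    · rintro ⟨heM, heF⟩
      obtain ⟨v, rfl⟩ := (hM e).1 heM
      exact ⟨v, by rw [hν2 v heF], by rw [hν2 v heF]; exact hμ1 v⟩
    · rintro ⟨v, rfl, hv⟩
      have h : s(v, μ v) ∉ F := fun h => hv (hν1 v h)
      rw [hν2 v h]
      exact ⟨hMmem v, h⟩
end

section
/- Let m ≥ 1 and for each i ∈ {1, …, m} let Z_i be a two-element subset of {1,2,3}. Then there exists a function c : {1, …, 2m} → {1,2,3} such that {c(2i−1), c(2i)} = Z_i for every i ∈ {1, …, m}, and c(j) ≠ c(j+1) for every j ∈ {1, …, 2m−1}, and also c(2m) ≠ c(1). In other words, the edges of an even cycle of length 2m, grouped into m consecutive pairs with prescribed two-element color lists from a 3-element palette for each pair, can be colored so that each pair realizes exactly its list and every two cyclically consecutive edges receive different colors. -/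
/-!
Color the pairs one after another, remembering only the last color used. If that color is `w` and
the next list is `{x, y}`, the pair can be colored `x, y`, ending in `y`, exactly when `w ≠ x`.
Hence from `w ∈ Z` one can only end in `w` again, while from `w ∉ Z` one can end in either element
of `Z`. Since any two-element subset of the palette contains a color different from `x`, once both
elements of some list are reachable as ends, both elements of every later list are.

Start with a virtual color `p` taken from the *last* list. If `p` lies in every list, every pair can
end in `p` (`Reach.of_forall_mem`). Otherwise some list misses `p`, and from there on every
element of the current list is reachable, so `p` is reachable at the end
(`Reach.of_exists_notMem`). Either way the last edge gets the color `p`, and the first edge avoids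
`p`, which closes the cycle.
-/

/-- `Reach Z p k y`: starting after an edge of color `p`, the first `k` pairs can be colored
from their lists so that the last color used is `y`. Edge `0` is the virtual edge of color `p`, and
the `i`-th pair consists of the edges `2i + 1` and `2i + 2`. -/
def Reach (Z : ℕ → Finset (Fin 3)) (p : Fin 3) (k : ℕ) (y : Fin 3) : Prop :=
  ∃ c : ℕ → Fin 3, c 0 = p ∧ c (2 * k) = y ∧
    (∀ i < k, ({c (2 * i + 1), c (2 * i + 2)} : Finset (Fin 3)) = Z i) ∧
    ∀ j < 2 * k, c j ≠ c (j + 1)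

lemma Reach.step {Z : ℕ → Finset (Fin 3)} {p w x y : Fin 3} {k : ℕ} (h : Reach Z p k w)
    (hZ : Z k = {x, y}) (hxy : x ≠ y) (hwx : w ≠ x) : Reach Z p (k + 1) y := by
  obtain ⟨c, h0, hk, hp, hc⟩ := h
  refine ⟨fun j => if j ≤ 2 * k then c j else if j = 2 * k + 1 then x else y, ?_, ?_, ?_, ?_⟩
  · simpa using h0
  · simp [mul_add]
  · intro i hi
    rcases Nat.lt_succ_iff_lt_or_eq.mp hi with hi | rfl
    · rw [← hp i hi]
      simp only [if_pos (show 2 * i + 1 ≤ 2 * k by omega),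
        if_pos (show 2 * i + 2 ≤ 2 * k by omega)]
    · simp [hZ]
  · intro j hj
    rcases lt_trichotomy j (2 * k) with h | rfl | h
    · simpa [h.le, Nat.succ_le_of_lt h] using hc j h
    · simpa [hk] using hwx
    · obtain rfl : j = 2 * k + 1 := by omega
      simpa using hxy

lemma exists_eq_pair_of_mem : ∀ (S : Finset (Fin 3)) (y : Fin 3), S.card = 2 → y ∈ S →
    ∃ x, S = {x, y} ∧ x ≠ y := by
  decide

lemma Reach.of_forall_mem {Z : ℕ → Finset (Fin 3)} (hZ : ∀ i, (Z i).card = 2) {p : Fin 3} {k : ℕ}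
    (h : ∀ i < k, p ∈ Z i) : Reach Z p k p := by
  induction k with
  | zero => exact ⟨fun _ => p, rfl, rfl, by simp, by simp⟩
  | succ k ih =>
    obtain ⟨x, hx, hxp⟩ := exists_eq_pair_of_mem (Z k) p (hZ k) (h k (by omega))
    exact (ih fun i hi => h i (by omega)).step hx hxp hxp.symm

/-- Once a list has missed the starting color, both elements of the current list are reachable. -/
lemma Reach.of_exists_notMem {Z : ℕ → Finset (Fin 3)} (hZ : ∀ i, (Z i).card = 2) {p : Fin 3}
    {k : ℕ} (h : ∃ i ≤ k, p ∉ Z i) {y : Fin 3} (hy : y ∈ Z k) : Reach Z p (k + 1) y := by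
  induction k generalizing y with
  | zero =>
    obtain ⟨i, hi, hp⟩ := h
    obtain rfl : i = 0 := by omega
    obtain ⟨x, hx, hxy⟩ := exists_eq_pair_of_mem _ y (hZ 0) hy
    refine (Reach.of_forall_mem hZ (k := 0) (by simp)).step hx hxy ?_
    rintro rfl
    simp [hx] at hp
  | succ k ih =>
    obtain ⟨x, hx, hxy⟩ := exists_eq_pair_of_mem _ y (hZ (k + 1)) hy
    by_cases hk : ∃ i ≤ k, p ∉ Z i
    · obtain ⟨w, hw, hwx⟩ := Finset.exists_mem_ne (by rw [hZ k]; norm_num) x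
      exact (ih hk hw).step hx hxy hwx
    · -- All earlier lists contain `p`, so the list missing `p` is the current one.
      push Not at hk
      refine (Reach.of_forall_mem hZ fun i hi => hk i (by omega)).step hx hxy ?_
      rintro rfl
      obtain ⟨i, hi, hp⟩ := h
      rcases Nat.le_succ_iff.mp hi with hi | rfl
      · exact hp (hk i hi)
      · simp [hx] at hp

/-- The edges of an even cycle of length `2m`, grouped into `m` consecutive
pairs, each pair carrying a prescribed two-element list of colors from a
3-element palette, can be colored so that each pair realizes exactly its list
and every two cyclically consecutive edges receive different colors.
(Edges are indexed `0, 1, …, 2m-1`; the `i`-th pair consists of the edges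
`2i` and `2i+1`.) -/
theorem even_cycle_list_precoloring
    (m : ℕ) (hm : 1 ≤ m)
    (Z : Fin m → Finset (Fin 3)) (hZ : ∀ i, (Z i).card = 2) :
    ∃ c : ℕ → Fin 3,
      (∀ i : Fin m,
        ({c (2 * i.val), c (2 * i.val + 1)} : Finset (Fin 3)) = Z i) ∧
      (∀ j : ℕ, j + 1 < 2 * m → c j ≠ c (j + 1)) ∧
      c (2 * m - 1) ≠ c 0 := by
  obtain ⟨n, rfl⟩ : ∃ n, m = n + 1 := ⟨m - 1, by omega⟩
  -- Extend the lists to all of `ℕ`; the values beyond `n` play no role.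
  let Z' : ℕ → Finset (Fin 3) := fun i => Z (Fin.ofNat (n + 1) i)
  have hZ' : ∀ i, (Z' i).card = 2 := fun i => hZ _
  obtain ⟨p, hp⟩ : (Z' n).Nonempty := Finset.card_pos.mp (by rw [hZ' n]; norm_num)
  have hR : Reach Z' p (n + 1) p := by
    by_cases h : ∃ i ≤ n, p ∉ Z' i
    · exact Reach.of_exists_notMem hZ' h hp
    · push Not at h
      exact Reach.of_forall_mem hZ' fun i hi => h i (by omega)
  obtain ⟨c, h0, hk, hc, hne⟩ := hR
  refine ⟨fun j => c (j + 1), fun i => ?_, fun j hj => hne (j + 1) hj, ?_⟩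
  · simpa [Z'] using hc i i.isLt
  · have h := hne 0 (by omega)
    rw [h0, ← hk] at h
    exact h
end

section
/- Let G be the complete graph on n ≥ 5 vertices, let C be a cycle cover of G and M a perfect matching of G, and let H be any Hamiltonian cycle of G. Then: (i) every vertex of G is incident to exactly two edges of H; (ii) for every 3-kite t of C (with vertex set T, |T| = 3), the number of edges of H with both endpoints in T is at most 2; and (iii) for every 4-kite s of C (with vertex set S, |S| = 4), the number of edges of H with both endpoints in S is at most 3. Consequently, regarding each edge of H as its two half-edges, H satisfies the conditions of a relaxed cycle cover improving C with respect to M: for each 3-kite the number of half-edges of its edges contained in H is even and at most 4, and for each 4-kite the number of half-edges of its edges or diagonals contained in H is even and at most 6. -/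
open SimpleGraph

theorem ncard_incident_edges {V : Type*} [DecidableEq V] {G : SimpleGraph V} {v₀ : V}
    {p : G.Walk v₀ v₀} (hp : p.IsHamiltonianCycle) (a : V) :
    ({e : Sym2 V | e ∈ p.edges ∧ a ∈ e}).ncard = 2 := by
  rw [← hp.isCycle.ncard_neighborSet_toSubgraph_eq_two (hp.mem_support a)]
  have h : {e : Sym2 V | e ∈ p.edges ∧ a ∈ e} =
      (fun b => s(a, b)) '' p.toSubgraph.neighborSet a := by
    ext e
    simp only [Set.mem_ofPred_eq, Set.mem_image, Subgraph.mem_neighborSet,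
      Walk.adj_toSubgraph_iff_mem_edges]
    constructor
    · rintro ⟨he, b, rfl⟩
      exact ⟨b, he, rfl⟩
    · rintro ⟨b, hb, rfl⟩
      exact ⟨hb, Sym2.mem_mk_left a b⟩
  rw [h]
  exact Set.ncard_image_of_injective _ fun b c hbc => Sym2.congr_right.1 hbc

/-- A closed walk visiting both a vertex of `S` and a vertex outside `S` has an edge
leaving `S`. -/
theorem exists_edge_leaving {V : Type*} [DecidableEq V] {G : SimpleGraph V} {v₀ u w : V}
    (p : G.Walk v₀ v₀) (hu : u ∈ p.support) (hw : w ∈ p.support) (S : Finset V)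
    (huS : u ∈ S) (hwS : w ∉ S) :
    ∃ a b, s(a, b) ∈ p.edges ∧ a ∈ S ∧ b ∉ S := by
  have hw' : w ∈ (p.rotate u hu).support := (p.mem_support_rotate_iff u hu).2 hw
  obtain ⟨d, hd, h1, h2⟩ :=
    ((p.rotate u hu).takeUntil w hw').exists_boundary_dart (S : Set V) huS hwS
  refine ⟨d.fst, d.snd, ?_, h1, h2⟩
  have h3 : d.edge ∈ (p.rotate u hu).edges :=
    (p.rotate u hu).edges_takeUntil_subset_edges hw' (List.mem_map_of_mem hd)
  exact (p.rotate_edges u hu).mem_iff.1 h3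

/-- A Hamiltonian cycle has fewer than `|S|` edges inside a nonempty proper vertex set `S`. -/
theorem ncard_edges_inside_lt {V : Type*} [DecidableEq V] {G : SimpleGraph V} {v₀ u w : V}
    {p : G.Walk v₀ v₀} (hp : p.IsHamiltonianCycle) (S : Finset V) (hu : u ∈ S) (hw : w ∉ S) :
    ({e : Sym2 V | e ∈ p.edges ∧ ∀ b ∈ e, b ∈ S}).ncard < S.card := by
  classical
  obtain ⟨a, b, hab, ha, hb⟩ :=
    exists_edge_leaving p (hp.mem_support u) (hp.mem_support w) S hu hw
  set E := p.edges.toFinset with hE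
  have hI : {e : Sym2 V | e ∈ p.edges ∧ ∀ b ∈ e, b ∈ S} =
      ((E.filter fun e => ∀ b ∈ e, b ∈ S : Finset (Sym2 V)) : Set (Sym2 V)) := by
    ext e; simp [hE]
  rw [hI, Set.ncard_coe_finset]
  set I := E.filter fun e => ∀ b ∈ e, b ∈ S with hIdef
  have hcount := Finset.sum_card_bipartiteAbove_eq_sum_card_bipartiteBelow
    (s := S) (t := E) (fun v e => v ∈ e)
  have hdeg : ∀ v ∈ S, (E.bipartiteAbove (fun v e => v ∈ e) v).card = 2 := by
    intro v _
    rw [← ncard_incident_edges hp v, ← Set.ncard_coe_finset]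
    congr 1
    ext e; simp [hE, Finset.bipartiteAbove]
  rw [Finset.sum_congr rfl hdeg, Finset.sum_const, smul_eq_mul] at hcount
  have hnot : s(a, b) ∉ I := fun h =>
    hb ((Finset.mem_filter.1 h).2 b (Sym2.mem_mk_right a b))
  have hsub : insert s(a, b) I ⊆ E :=
    Finset.insert_subset (by simpa [hE] using hab) (Finset.filter_subset _ _)
  have hle := Finset.sum_le_sum_of_subset
    (f := fun e => (S.bipartiteBelow (fun v e => v ∈ e) e).card) hsub
  rw [Finset.sum_insert hnot] at hle
  have hone : 1 ≤ (S.bipartiteBelow (fun v e => v ∈ e) s(a, b)).card :=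
    Finset.card_pos.2 ⟨a, by simp [Finset.bipartiteBelow, ha]⟩
  have htwo : I.card * 2 ≤ ∑ e ∈ I, (S.bipartiteBelow (fun v e => v ∈ e) e).card := by
    rw [← smul_eq_mul]
    refine Finset.card_nsmul_le_sum _ _ _ fun e he => ?_
    obtain ⟨heE, heS⟩ := Finset.mem_filter.1 he
    have hep : e ∈ p.edges := by simpa [hE] using heE
    induction e with
    | _ x y =>
      have hxy : x ≠ y := (p.adj_of_mem_edges hep).ne
      rw [← Finset.card_pair hxy]
      apply Finset.card_le_card
      intro z hz
      have hz' : z ∈ s(x, y) := by simpa using hz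
      exact Finset.mem_filter.2 ⟨heS z hz', hz'⟩
  omega

/-- A Hamiltonian cycle of the complete graph on `n ≥ 5` vertices meets every
vertex in exactly two edges, contains at most 2 edges inside any 3-kite and at
most 3 edges inside any 4-kite; consequently, regarded as a set of half-edges,
it satisfies the parity and cardinality conditions of a relaxed cycle cover
improving `C` with respect to `M`. -/
theorem hamiltonian_cycle_is_relaxed_cycle_cover
    {V : Type*} [Fintype V] [DecidableEq V] (hn : 5 ≤ Fintype.card V)
    (C M : Finset (Sym2 V))
    (hC : IsCycleCoverEdges C) (hM : IsPerfectMatchingEdges M)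
    (v₀ : V) (p : (⊤ : SimpleGraph V).Walk v₀ v₀) (hp : p.IsHamiltonianCycle) :
    (∀ a : V, ({e : Sym2 V | e ∈ p.edges ∧ a ∈ e}).ncard = 2) ∧
    (∀ x y z : V, IsThreeKite C M x y z →
      ({e : Sym2 V | e ∈ p.edges ∧ ∀ b ∈ e, b = x ∨ b = y ∨ b = z}).ncard ≤ 2) ∧
    (∀ x y z t : V, IsFourKite C M x y z t →
      ({e : Sym2 V | e ∈ p.edges ∧
        ∀ b ∈ e, b = x ∨ b = y ∨ b = z ∨ b = t}).ncard ≤ 3) ∧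
    (∀ x y z : V, IsThreeKite C M x y z →
      Even (2 * ({e : Sym2 V | e ∈ p.edges ∧
          ∀ b ∈ e, b = x ∨ b = y ∨ b = z}).ncard) ∧
        2 * ({e : Sym2 V | e ∈ p.edges ∧
          ∀ b ∈ e, b = x ∨ b = y ∨ b = z}).ncard ≤ 4) ∧
    (∀ x y z t : V, IsFourKite C M x y z t →
      Even (2 * ({e : Sym2 V | e ∈ p.edges ∧
          ∀ b ∈ e, b = x ∨ b = y ∨ b = z ∨ b = t}).ncard) ∧
        2 * ({e : Sym2 V | e ∈ p.edges ∧
          ∀ b ∈ e, b = x ∨ b = y ∨ b = z ∨ b = t}).ncard ≤ 6) := by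
  have three : ∀ x y z : V,
      ({e : Sym2 V | e ∈ p.edges ∧ ∀ b ∈ e, b = x ∨ b = y ∨ b = z}).ncard ≤ 2 := by
    intro x y z
    have hcard : ({x, y, z} : Finset V).card ≤ 3 := Finset.card_le_three
    obtain ⟨w, hw⟩ : ∃ w, w ∉ ({x, y, z} : Finset V) := by
      by_contra! h
      have := Finset.card_le_card (fun v _ => h v : Finset.univ ⊆ ({x, y, z} : Finset V))
      rw [Finset.card_univ] at this
      omega
    have h := ncard_edges_inside_lt hp {x, y, z} (u := x) (by simp) hw
    simp only [Finset.mem_insert, Finset.mem_singleton] at h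
    omega
  have four : ∀ x y z t : V,
      ({e : Sym2 V | e ∈ p.edges ∧
        ∀ b ∈ e, b = x ∨ b = y ∨ b = z ∨ b = t}).ncard ≤ 3 := by
    intro x y z t
    have hcard : ({x, y, z, t} : Finset V).card ≤ 4 := Finset.card_le_four
    obtain ⟨w, hw⟩ : ∃ w, w ∉ ({x, y, z, t} : Finset V) := by
      by_contra! h
      have := Finset.card_le_card (fun v _ => h v : Finset.univ ⊆ ({x, y, z, t} : Finset V))
      rw [Finset.card_univ] at this
      omega
    have h := ncard_edges_inside_lt hp {x, y, z, t} (u := x) (by simp) hw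
    simp only [Finset.mem_insert, Finset.mem_singleton] at h
    omega
  refine ⟨ncard_incident_edges hp, fun x y z _ => three x y z, fun x y z t _ => four x y z t,
    fun x y z _ => ⟨even_two_mul _, ?_⟩, fun x y z t _ => ⟨even_two_mul _, ?_⟩⟩
  · have := three x y z
    omega
  · have := four x y z t
    omega
end

section
/- Let G be the complete graph on n ≥ 3 vertices with nonnegative edge weights w, let r ≥ 1, and let H be a multigraph on the vertices of G whose edge-copies are edges of G (with multiplicities), of total weight W (each copy counted with its weight). If H admits a path-r-coloring, then G contains a Hamiltonian cycle of weight at least W/r. -/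
open SimpleGraph in
/-- In a finite acyclic graph every component has a vertex of degree at most one: the end of a
longest path among those starting at a given vertex. -/
lemma exists_reachable_ncard_neighborSet_le_one {V : Type*} [Fintype V] {G : SimpleGraph V}
    (hG : G.IsAcyclic) (x : V) :
    ∃ y, G.Reachable x y ∧ (G.neighborSet y).ncard ≤ 1 := by
  classical
  let s : Set ℕ := {n | ∃ (y : V) (p : G.Walk x y), p.IsPath ∧ p.length = n}
  have hs : s.Finite := (Set.finite_lt_nat (Fintype.card V)).subset
    fun n ⟨_, _, hp, hn⟩ ↦ hn ▸ hp.length_lt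
  obtain ⟨n, ⟨y, p, hp, rfl⟩, hmax⟩ := hs.exists_maximal ⟨0, x, Walk.nil, by simp⟩
  refine ⟨y, ⟨p⟩, ?_⟩
  have hsub : G.neighborSet y ⊆ {p.penultimate} := by
    intro z hz
    have hz' : G.Adj y z := hz
    refine hG.eq_penultimate_of_adj_end hp hz' ?_
    by_contra hzp
    have := hmax (y := p.length + 1) ⟨z, p.concat hz', hp.concat hzp hz', by simp⟩ (by lia)
    lia
  simpa using Set.ncard_le_ncard hsub

open SimpleGraph in
/-- Joining two components by an edge between vertices of degree at most one keeps a linear forest: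
no cycle arises, and only these two degrees grow, to at most two. -/
lemma IsLinearForest.sup_edge {V : Type*} [Fintype V] {G : SimpleGraph V} (hG : IsLinearForest G)
    {a b : V} (hab : ¬ G.Reachable a b) (ha : (G.neighborSet a).ncard ≤ 1)
    (hb : (G.neighborSet b).ncard ≤ 1) : IsLinearForest (G ⊔ edge a b) := by
  have hne : a ≠ b := fun h ↦ hab (h ▸ Reachable.refl _)
  refine ⟨hG.1.sup_edge_of_not_reachable hab, fun v ↦ ?_⟩
  by_cases hva : v = a
  · subst hva
    have hsub : (G ⊔ edge v b).neighborSet v ⊆ insert b (G.neighborSet v) := by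
      intro z hz
      simp only [mem_neighborSet, sup_adj, edge_adj, Set.mem_insert_iff] at hz ⊢
      grind
    have := Set.ncard_le_ncard hsub
    have := Set.ncard_insert_le b (G.neighborSet v)
    lia
  by_cases hvb : v = b
  · subst hvb
    have hsub : (G ⊔ edge a v).neighborSet v ⊆ insert a (G.neighborSet v) := by
      intro z hz
      simp only [mem_neighborSet, sup_adj, edge_adj, Set.mem_insert_iff] at hz ⊢
      grind
    have := Set.ncard_le_ncard hsub
    have := Set.ncard_insert_le a (G.neighborSet v)
    lia
  · have hsub : (G ⊔ edge a b).neighborSet v ⊆ G.neighborSet v := by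
      intro z hz
      simp only [mem_neighborSet, sup_adj, edge_adj] at hz ⊢
      grind
    exact (Set.ncard_le_ncard hsub).trans (hG.2 v)

open SimpleGraph in
/-- Every linear forest on a nonempty finite vertex set extends to a connected one, namely to any
maximal linear forest above it. -/
lemma exists_linearForest_connected {V : Type*} [Fintype V] [Nonempty V] {F : SimpleGraph V}
    (hF : IsLinearForest F) : ∃ T, F ≤ T ∧ IsLinearForest T ∧ T.Connected := by
  classical
  obtain ⟨T, hFT, hT⟩ :=
    (Set.toFinite {H : SimpleGraph V | IsLinearForest H}).exists_le_maximal hF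
  refine ⟨T, hFT, hT.1, ⟨fun x y ↦ ?_⟩⟩
  by_contra hxy
  obtain ⟨a, hxa, ha⟩ := exists_reachable_ncard_neighborSet_le_one hT.1.1 x
  obtain ⟨b, hyb, hb⟩ := exists_reachable_ncard_neighborSet_le_one hT.1.1 y
  have hab : ¬ T.Reachable a b := fun h ↦ hxy ((hxa.trans h).trans hyb.symm)
  have hle := hT.2 (IsLinearForest.sup_edge hT.1 hab ha hb) le_sup_left
  refine hab (Adj.reachable (hle ?_))
  have hne : a ≠ b := fun h ↦ hab (h ▸ Reachable.refl _)
  simp [edge_adj, hne]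

open SimpleGraph in
/-- A longest path of a connected linear forest is Hamiltonian. -/
lemma exists_isHamiltonian_of_connected {V : Type*} [Fintype V] [DecidableEq V]
    {T : SimpleGraph V} (hT : IsLinearForest T) (hc : T.Connected) :
    ∃ (u v : V) (p : T.Walk u v), p.IsHamiltonian := by
  have := hc.nonempty
  obtain ⟨u, v, p, hp, hmax⟩ := Walk.exists_isPath_forall_isPath_length_le_length T
  refine ⟨u, v, p, hp.isHamiltonian_of_mem fun z ↦ ?_⟩
  have hclosed : ∀ a b, T.Adj a b → a ∈ p.support → b ∈ p.support := by
    intro a b hab ha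
    obtain ⟨i, rfl, hi⟩ := Walk.mem_support_iff_exists_getVert.mp ha
    by_contra hb
    rcases Nat.eq_zero_or_pos i with rfl | hi0
    · have hub : T.Adj b u := by simpa using hab.symm
      have := hmax _ _ (p.cons hub) (hp.cons hb)
      simp at this
    rcases hi.eq_or_lt with rfl | hil
    · have hvb : T.Adj v b := by simpa using hab
      have := hmax _ _ (p.concat hvb) (hp.concat hb hvb)
      simp at this
    -- An inner vertex adjacent to `b` off the path would have three distinct neighbours.
    have h1 : T.Adj (p.getVert i) (p.getVert (i + 1)) := p.adj_getVert_succ hil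
    have h2 : T.Adj (p.getVert i) (p.getVert (i - 1)) := by
      have := p.adj_getVert_succ (i := i - 1) (by lia)
      rw [Nat.sub_add_cancel hi0] at this
      exact this.symm
    have hne : p.getVert (i + 1) ≠ p.getVert (i - 1) := by
      intro h
      have := hp.getVert_injOn (show i + 1 ≤ p.length by lia) (show i - 1 ≤ p.length by lia) h
      lia
    have hsub : {b, p.getVert (i + 1), p.getVert (i - 1)} ⊆ T.neighborSet (p.getVert i) := by
      rintro y (rfl | rfl | rfl)
      exacts [hab, h1, h2]
    have hb1 : b ≠ p.getVert (i + 1) := fun h ↦ hb (h ▸ p.getVert_mem_support _)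
    have hb2 : b ≠ p.getVert (i - 1) := fun h ↦ hb (h ▸ p.getVert_mem_support _)
    have h3 : ({b, p.getVert (i + 1), p.getVert (i - 1)} : Set V).ncard = 3 :=
      Set.ncard_eq_three.mpr ⟨_, _, _, hb1, hb2, hne, rfl⟩
    have := Set.ncard_le_ncard hsub
    have := hT.2 (p.getVert i)
    lia
  have hr := (reachable_iff_reflTransGen u z).mp (hc.preconnected u z)
  induction hr with
  | refl => exact p.start_mem_support
  | tail _ hadj ih => exact hclosed _ _ hadj ih

open SimpleGraph in
/-- A Hamiltonian path of a tree uses all its edges, since both have `|V| - 1` of them. -/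
lemma mem_edges_of_isHamiltonian {V : Type*} [Fintype V] [DecidableEq V] {T : SimpleGraph V}
    (hT : T.IsTree) {u v : V} {p : T.Walk u v} (hp : p.IsHamiltonian) {e : Sym2 V}
    (he : e ∈ T.edgeSet) : e ∈ p.edges := by
  classical
  have hsub : p.edges.toFinset ⊆ T.edgeFinset := by
    intro e he
    simpa using p.edges_subset_edgeSet (List.mem_toFinset.mp he)
  have hcard : T.edgeFinset.card ≤ p.edges.toFinset.card := by
    rw [List.toFinset_card_of_nodup hp.isPath.isTrail.edges_nodup, Walk.length_edges,
      hp.length_eq]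
    have := hT.card_edgeFinset
    lia
  have := Finset.eq_of_subset_of_card_le hsub hcard
  rw [← List.mem_toFinset, this]
  simpa using he

open SimpleGraph in
/-- The edges of a linear forest on at least three vertices lie on a Hamiltonian cycle of the
complete graph. -/
lemma IsLinearForest.exists_isHamiltonianCycle {V : Type*} [Fintype V] [DecidableEq V]
    (hn : 3 ≤ Fintype.card V) {F : SimpleGraph V} (hF : IsLinearForest F) :
    ∃ (v₀ : V) (p : (⊤ : SimpleGraph V).Walk v₀ v₀),
      p.IsHamiltonianCycle ∧ ∀ e ∈ F.edgeSet, e ∈ p.edges := by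
  have : Nonempty V := Fintype.card_pos_iff.mp (by lia)
  obtain ⟨T, hFT, hT, hc⟩ := exists_linearForest_connected hF
  obtain ⟨u, v, p, hp⟩ := exists_isHamiltonian_of_connected hT hc
  have hlen := hp.length_eq
  have huv : v ≠ u := by
    rintro rfl
    have := Walk.length_eq_zero_iff.mpr (Walk.isPath_iff_nil.mp hp.isPath)
    lia
  have hvu : s(v, u) ∉ p.edges := by
    intro h
    have hadj : T.Adj u v := (p.adj_of_mem_edges h).symm
    have := congrArg (fun q : T.Path u v ↦ (q : T.Walk u v).length)
      ((hT.1.subsingleton_path u v).elim ⟨p, hp.isPath⟩ (Path.singleton hadj))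
    simp [Path.singleton] at this
    lia
  let q : (⊤ : SimpleGraph V).Walk u v := p.mapLe le_top
  have hq : q.IsHamiltonian := by
    intro a
    simpa [q, Walk.mapLe] using hp a
  have hqe : q.edges = p.edges := by simp [q]
  refine ⟨v, q.cons huv, ⟨?_, ?_⟩, fun e he ↦ ?_⟩
  · rw [Walk.cons_isCycle_iff, hqe]
    exact ⟨hq.isPath, hvu⟩
  · intro a
    simpa using hq a
  · rw [Walk.edges_cons, hqe]
    exact List.mem_cons_of_mem _
      (mem_edges_of_isHamiltonian ⟨hc, hT.1⟩ hp (edgeSet_mono hFT he))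

/-- If a loopless multigraph on the vertices of the complete graph on `n ≥ 3`
vertices, of total weight `W = ∑ m(e)·w(e)`, admits a path-`r`-coloring, then
the complete graph contains a Hamiltonian cycle of weight at least `W / r`. -/
theorem path_r_colorable_gives_heavy_tour
    {V : Type*} [Fintype V] [DecidableEq V] (hn : 3 ≤ Fintype.card V)
    (w : Sym2 V → ℝ) (hw : ∀ e, 0 ≤ w e)
    (r : ℕ) (hr : 1 ≤ r)
    (m : Sym2 V → ℕ) (hloop : ∀ e : Sym2 V, e.IsDiag → m e = 0)
    (h : PathColorable r m) :
    ∃ (v₀ : V) (p : (⊤ : SimpleGraph V).Walk v₀ v₀),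
      p.IsHamiltonianCycle ∧
      (∑ e : Sym2 V, (m e : ℝ) * w e) / (r : ℝ) ≤
        ∑ e ∈ p.edges.toFinset, w e := by
  obtain ⟨f, hcard, hlin⟩ := h
  have hr0 : (0 : ℝ) < r := by exact_mod_cast hr
  have hsum : ∑ e : Sym2 V, (m e : ℝ) * w e = ∑ c : Fin r, ∑ e with c ∈ f e, w e := by
    simp_rw [Finset.sum_filter]
    rw [Finset.sum_comm]
    refine Finset.sum_congr rfl fun e _ ↦ ?_
    rw [← Finset.sum_filter, Finset.sum_const, Finset.filter_univ_mem, hcard, nsmul_eq_mul]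
  have hne : (Finset.univ : Finset (Fin r)).Nonempty := ⟨⟨0, hr⟩, Finset.mem_univ _⟩
  obtain ⟨c, -, hc⟩ : ∃ c ∈ (Finset.univ : Finset (Fin r)),
      (∑ e : Sym2 V, (m e : ℝ) * w e) / (r : ℝ) ≤ ∑ e with c ∈ f e, w e := by
    refine Finset.exists_le_of_sum_le hne ?_
    rw [← hsum, Finset.sum_const, Finset.card_univ, Fintype.card_fin, nsmul_eq_mul,
      mul_div_cancel₀ _ hr0.ne']
  obtain ⟨v₀, p, hp, hmem⟩ := (hlin c).exists_isHamiltonianCycle hn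
  refine ⟨v₀, p, hp, hc.trans ?_⟩
  refine Finset.sum_le_sum_of_subset_of_nonneg (fun e he ↦ ?_) fun e _ _ ↦ hw e
  have hce : c ∈ f e := (Finset.mem_filter.mp he).2
  -- `fromEdgeSet` discards loops, so the colour class has to be loopless to lose no weight.
  have hd : ¬ e.IsDiag := fun hd ↦ by
    have := Finset.card_pos.mpr ⟨c, hce⟩
    rw [hcard, hloop e hd] at this
    exact this.false
  refine List.mem_toFinset.mpr (hmem e ?_)
  rw [SimpleGraph.edgeSet_fromEdgeSet]
  exact ⟨hce, by simpa using hd⟩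
end
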